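/- There exists a deterministic online bin-packing algorithm A such that for every finite input sequence I of symmetric L-shapes (those with ℓx = ℓy and wx = wy), the number of bins used by A on I is at most 41·OPT(I) + 9. -/

import Mathlib

/-- An L-shape, given by its four parameters: arm lengths `lx, ly` and widths `wx, wy`. -/
structure LShape where
  lx : ℝ
  wx : ℝ
  ly : ℝ
  wy : ℝ

/-- The parameter constraints of an L-shape: `0 ≤ wx ≤ lx ≤ 1` and `0 ≤ wy ≤ ly ≤ 1`. -/
def LShape.IsValid (L : LShape) : Prop :=
  0 ≤ L.wx ∧ L.wx ≤ L.lx ∧ L.lx ≤ 1 ∧ 0 ≤ L.wy ∧ L.wy ≤ L.ly ∧ L.ly ≤ 1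

/-- The point set `([0,lx]×[0,wy]) ∪ ([0,wx]×[0,ly])` of an L-shape (reference point at the
origin). -/
def LShape.toSet (L : LShape) : Set (ℝ × ℝ) :=
  Set.Icc ((0, 0) : ℝ × ℝ) (L.lx, L.wy) ∪ Set.Icc ((0, 0) : ℝ × ℝ) (L.wx, L.ly)

/-- Translate a set in the plane by a vector. -/
def planeTranslate (v : ℝ × ℝ) (S : Set (ℝ × ℝ)) : Set (ℝ × ℝ) := (· + v) '' S

/-- The unit bin `[0,1]²`. -/
def unitBin : Set (ℝ × ℝ) := Set.Icc ((0, 0) : ℝ × ℝ) (1, 1)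

/-- The online decision (bin index, translation vector) made by algorithm `A` for the `i`-th
item of the list `l`: it depends only on the first `i+1` items. -/
def placeOf (A : List LShape → ℕ × ℝ × ℝ) (l : List LShape) (i : Fin l.length) : ℕ × ℝ × ℝ :=
  A (l.take (i.1 + 1))

/-- The placements produced by `A` on input `l` form valid bin packings: each translate lies
in the unit bin, and items in the same bin have pairwise disjoint interiors. -/
def OnlinePacks (A : List LShape → ℕ × ℝ × ℝ) (l : List LShape) : Prop :=
  (∀ i : Fin l.length, planeTranslate (placeOf A l i).2 (l.get i).toSet ⊆ unitBin) ∧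
  ∀ i j : Fin l.length, i ≠ j → (placeOf A l i).1 = (placeOf A l j).1 →
    Disjoint (interior (planeTranslate (placeOf A l i).2 (l.get i).toSet))
             (interior (planeTranslate (placeOf A l j).2 (l.get j).toSet))

/-- The number of distinct bins used by `A` on input `l`. -/
def binsUsed (A : List LShape → ℕ × ℝ × ℝ) (l : List LShape) : ℕ :=
  ((Finset.univ : Finset (Fin l.length)).image fun i => (placeOf A l i).1).card

/-- The items of `l` can be packed offline into `m` unit bins. -/
def OffPacks (l : List LShape) (m : ℕ) : Prop :=
  ∃ (bin : Fin l.length → ℕ) (v : Fin l.length → ℝ × ℝ),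
    (∀ i, bin i < m) ∧
    (∀ i, planeTranslate (v i) (l.get i).toSet ⊆ unitBin) ∧
    ∀ i j, i ≠ j → bin i = bin j →
      Disjoint (interior (planeTranslate (v i) (l.get i).toSet))
               (interior (planeTranslate (v j) (l.get j).toSet))

/-- The offline optimum: the minimum number of unit bins into which `l` can be packed. -/
noncomputable def OPT (l : List LShape) : ℕ := sInf {m | OffPacks l m}

/-!
Items of width zero are nested in one bin, and the other items are *small* if `ℓ ≤ 1 / 2`.

A *long* item (`ℓ > 1 / 2`) of width `w` leaves a gap `d = 1 - ℓ`. Any two L-shapes can be nested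
along the diagonal of the bin, where such an item needs an interval of length `w` starting in
`[0, d]`. Conversely, in any packing the vertical arms of the long items in a bin are disjoint on
the line `y = 1 / 2` and start in `[0, d]`. The long items are *wide* if `d < 3 w` and *narrow*
otherwise.

* A wide item is put at `min d w` on the diagonal and reserves `[min d w, 2 w)`. At most six wide
  items in a bin of any packing reserve intervals with a common point, so the reserved intervals
  have depth at most `6 OPT` and are coloured online with `18 OPT` colours by the
  Kierstead–Trotter algorithm. Each colour is a bin.
* The narrow items are classified by `u < d ≤ 3 u` for powers `u` of `1 / 3`. Every bin reserves for
  each class the interval `[2 u / 3, 2 u)` of the diagonal, in which the widths are piled up as long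
  as they start before `u`. These intervals are disjoint for different classes, and the total width
  of a class is at most `4 u OPT`, so `12 OPT + 1` bins suffice.
* The small items are classified by `s / 4 < ℓ ≤ s / 2` for powers `s` of `1 / 2`. The items of a
  class are piled up along the diagonals of squares of side `s`, and these squares are cut out of
  the bins by leftmost allocation of quadtree cells, which wastes less than `4 / 3` bins. Comparing
  areas, `8 OPT + 2` bins suffice.
-/

open Finset MeasureTheory

/-! ### Online rules -/

/-- A transformation of sequences is online if its `i`-th output depends only on the inputs up to
and including the `i`-th one. -/
def IsOnline {α β : Type*} (T : (ℕ → α) → ℕ → β) : Prop :=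
  ∀ ⦃f g : ℕ → α⦄ ⦃i : ℕ⦄, (∀ j ≤ i, f j = g j) → T f i = T g i

lemma IsOnline.comp {α β γ : Type*} {T : (ℕ → β) → ℕ → γ} {S : (ℕ → α) → ℕ → β}
    (hT : IsOnline T) (hS : IsOnline S) : IsOnline fun f => T (S f) :=
  fun _ _ _ h => hT fun _ hj => hS fun _ hk => h _ (hk.trans hj)

lemma isOnline_map {α β : Type*} (φ : α → β) : IsOnline fun (f : ℕ → α) i => φ (f i) :=
  fun _ _ i h => congrArg φ (h i le_rfl)

/-- The greedy online rule that answers each input by the least admissible number. What is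
admissible may depend on the current input and on the history of earlier inputs and answers. -/
noncomputable def firstFit {α : Type*} (Adm : (i : ℕ) → (Fin i → α × ℕ) → α → Set ℕ)
    (x : ℕ → α) (i : ℕ) : ℕ :=
  sInf (Adm i (fun j => (x j, firstFit Adm x j)) (x i))
termination_by i
decreasing_by exact j.2

lemma isOnline_firstFit {α : Type*} (Adm : (i : ℕ) → (Fin i → α × ℕ) → α → Set ℕ) :
    IsOnline (firstFit Adm) := by
  intro f g i h
  induction i using Nat.strong_induction_on with
  | _ i ih =>
    have history : (fun j : Fin i => (f j, firstFit Adm f j)) =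
        fun j : Fin i => (g j, firstFit Adm g j) :=
      funext fun j => Prod.ext (h j j.2.le) (ih j j.2 fun k hk => h k (hk.trans j.2.le))
    rw [firstFit, firstFit, history, h i le_rfl]

/-! ### Online colouring of intervals -/

section IntervalColouring

variable {X : Type*}

open scoped Classical in
/-- The level of an interval in the Kierstead–Trotter colouring: the least `k` such that each of its
points lies in at most `k` earlier intervals of level at most `k`. -/
noncomputable def ktLevel : (ℕ → Set X) → ℕ → ℕ :=
  firstFit fun _ hist J => {k | ∀ p ∈ J, #{j | (hist j).2 ≤ k ∧ p ∈ (hist j).1} ≤ k}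

/-- The shade of an interval in the Kierstead–Trotter colouring: the least one not used by an
earlier interval of the same level that meets it. -/
noncomputable def ktShade (I : ℕ → Set X) : ℕ → ℕ :=
  firstFit (fun _ hist J => {c | ∀ j, (hist j).1.2 = J.2 → ¬ Disjoint (hist j).1.1 J.1 →
    (hist j).2 ≠ c}) fun j => (I j, ktLevel I j)

/-- The Kierstead–Trotter colour of an interval; it encodes the pair of a level and a shade, since
there are only three shades. -/
noncomputable def ktColour (I : ℕ → Set X) (i : ℕ) : ℕ := 3 * ktLevel I i + ktShade I i

lemma isOnline_ktColour : IsOnline (ktColour (X := X)) := by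
  have online_level : IsOnline (ktLevel (X := X)) := isOnline_firstFit _
  intro I I' i h
  have shade : ktShade I i = ktShade I' i := isOnline_firstFit _ fun j hj =>
    Prod.ext (h j hj) (online_level fun k hk => h k (hk.trans hj))
  rw [ktColour, ktColour, online_level h, shade]

variable (I : ℕ → Set X)

open scoped Classical in
/-- The indices below `n` of the intervals that contain `p` and satisfy `P`. -/
noncomputable def coverers (n : ℕ) (P : ℕ → Prop) (p : X) : Finset ℕ :=
  {j ∈ range n | P j ∧ p ∈ I j}

lemma mem_coverers {n : ℕ} {P : ℕ → Prop} {p : X} {j : ℕ} :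
    j ∈ coverers I n P p ↔ j < n ∧ P j ∧ p ∈ I j := by
  simp [coverers]

lemma coverers_subset_range {n : ℕ} {P : ℕ → Prop} {p : X} : coverers I n P p ⊆ range n :=
  fun _ hj => mem_range.2 ((mem_coverers I).1 hj).1

lemma ktLevel_eq (i : ℕ) : ktLevel I i =
    sInf {k | ∀ p ∈ I i, #(coverers I i (fun j => ktLevel I j ≤ k) p) ≤ k} := by
  classical
  rw [ktLevel, firstFit, ← ktLevel]
  simp only [coverers, card_filter]
  congr! 6 with k p
  exact Fin.sum_univ_eq_sum_range (fun j => if ktLevel I j ≤ k ∧ p ∈ I j then 1 else 0) i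

lemma card_coverers_le_ktLevel {i : ℕ} {p : X} (hp : p ∈ I i) :
    #(coverers I i (fun j => ktLevel I j ≤ ktLevel I i) p) ≤ ktLevel I i := by
  have admissible : i ∈ {k | ∀ p ∈ I i, #(coverers I i (fun j => ktLevel I j ≤ k) p) ≤ k} :=
    fun p _ => (card_le_card (coverers_subset_range I)).trans (card_range i).le
  have h := Nat.sInf_mem ⟨i, admissible⟩
  rw [← ktLevel_eq] at h
  exact h p hp

lemma exists_ktLevel_le_card_coverers {i : ℕ} (hi : (I i).Nonempty) :
    ∃ p ∈ I i, ktLevel I i ≤ #(coverers I i (fun j => ktLevel I j < ktLevel I i) p) := by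
  rcases hk : ktLevel I i with _ | k
  · exact ⟨hi.some, hi.some_mem, Nat.zero_le _⟩
  · have not_admissible :
        k ∉ {k | ∀ p ∈ I i, #(coverers I i (fun j => ktLevel I j ≤ k) p) ≤ k} :=
      Nat.notMem_of_lt_sInf (by rw [← ktLevel_eq, hk]; exact k.lt_succ_self)
    simpa [Nat.lt_succ_iff, Nat.succ_le_iff] using not_admissible

lemma card_coverers_lt_ktLevel {i j : ℕ} (hij : i < j) (hl : ktLevel I i = ktLevel I j) {p : X}
    (hi : p ∈ I i) (hj : p ∈ I j) :
    #(coverers I j (fun k => ktLevel I k < ktLevel I j) p) < ktLevel I j := by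
  refine (card_lt_card ?_).trans_le (card_coverers_le_ktLevel I hj)
  refine (ssubset_iff_of_subset fun k hk => ?_).2 ⟨i, ?_, ?_⟩
  · rw [mem_coverers] at hk ⊢
    exact ⟨hk.1, hk.2.1.le, hk.2.2⟩
  · exact (mem_coverers I).2 ⟨hij, hl.le, hi⟩
  · simp [mem_coverers, hl]

lemma exists_private_point {i : ℕ} (hi : (I i).Nonempty) :
    ∃ p ∈ I i, ∀ j ≠ i, ktLevel I j = ktLevel I i → p ∉ I j := by
  obtain ⟨p, hp, covered⟩ := exists_ktLevel_le_card_coverers I hi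
  refine ⟨p, hp, fun j hji hl hpj => covered.not_gt ?_⟩
  rcases hji.lt_or_gt with h | h
  · exact card_coverers_lt_ktLevel I h hl hpj hp
  · rw [← hl]
    refine (card_le_card fun k hk => ?_).trans_lt (card_coverers_lt_ktLevel I h hl.symm hp hpj)
    rw [mem_coverers] at hk ⊢
    exact ⟨hk.1.trans h, hk.2⟩

lemma ktLevel_lt {N ω : ℕ} (hω : ∀ p, #(coverers I N (fun _ => True) p) ≤ ω) {i : ℕ} (hiN : i < N)
    (hi : (I i).Nonempty) : ktLevel I i < ω := by
  obtain ⟨p, hp, covered⟩ := exists_ktLevel_le_card_coverers I hi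
  refine (covered.trans_lt (card_lt_card ?_)).trans_le (hω p)
  refine (ssubset_iff_of_subset fun k hk => ?_).2 ⟨i, ?_, ?_⟩
  · rw [mem_coverers] at hk ⊢
    exact ⟨hk.1.trans hiN, trivial, hk.2.2⟩
  · exact (mem_coverers I).2 ⟨hiN, trivial, hp⟩
  · simp [mem_coverers]

/-- Of two intervals with private points to the left of `K`, the one reaching further out would
contain the private point of the other. -/
lemma card_le_one_of_private_points_left [LinearOrder X] {ι : Type*} {s : Finset ι}
    {J : ι → Set X} {K : Set X} {p : ι → X} (hJ : ∀ i ∈ s, (J i).OrdConnected)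
    (hJK : ∀ i ∈ s, ¬ Disjoint (J i) K) (hp : ∀ i ∈ s, p i ∈ J i)
    (hpriv : ∀ i ∈ s, ∀ j ∈ s, j ≠ i → p i ∉ J j) (hleft : ∀ i ∈ s, ∀ q ∈ K, p i < q) :
    #s ≤ 1 := by
  have eq_of_le : ∀ i ∈ s, ∀ j ∈ s, p i ≤ p j → i = j := by
    intro i hi j hj hle
    obtain ⟨q, hq, hqK⟩ := Set.not_disjoint_iff.1 (hJK i hi)
    by_contra hne
    exact hpriv j hj i hi hne ((hJ i hi).out (hp i hi) hq ⟨hle, (hleft j hj q hqK).le⟩)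
  exact card_le_one.2 fun i hi j hj => (le_total (p i) (p j)).elim (eq_of_le i hi j hj)
    fun hle => (eq_of_le j hj i hi hle).symm

lemma card_le_two_of_private_points [LinearOrder X] {ι : Type*} {s : Finset ι} {J : ι → Set X}
    {K : Set X} {p : ι → X} (hJ : ∀ i ∈ s, (J i).OrdConnected) (hK : K.OrdConnected)
    (hJK : ∀ i ∈ s, ¬ Disjoint (J i) K) (hp : ∀ i ∈ s, p i ∈ J i) (hpK : ∀ i ∈ s, p i ∉ K)
    (hpriv : ∀ i ∈ s, ∀ j ∈ s, j ≠ i → p i ∉ J j) : #s ≤ 2 := by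
  classical
  have left : #{i ∈ s | ∀ q ∈ K, p i < q} ≤ 1 := by
    have sub := filter_subset (fun i => ∀ q ∈ K, p i < q) s
    exact card_le_one_of_private_points_left (fun i hi => hJ i (sub hi))
      (fun i hi => hJK i (sub hi)) (fun i hi => hp i (sub hi))
      (fun i hi j hj => hpriv i (sub hi) j (sub hj)) fun i hi => (mem_filter.1 hi).2
  have right : #{i ∈ s | ∀ q ∈ K, q < p i} ≤ 1 := by
    have sub := filter_subset (fun i => ∀ q ∈ K, q < p i) s
    exact card_le_one_of_private_points_left (X := Xᵒᵈ) (fun i hi => (hJ i (sub hi)).dual)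
      (fun i hi => hJK i (sub hi)) (fun i hi => hp i (sub hi))
      (fun i hi j hj => hpriv i (sub hi) j (sub hj)) fun i hi => (mem_filter.1 hi).2
  have sides : s ⊆ {i ∈ s | ∀ q ∈ K, p i < q} ∪ {i ∈ s | ∀ q ∈ K, q < p i} := by
    intro i hi
    by_contra hside
    simp only [mem_union, mem_filter, hi, true_and, not_or, not_forall, not_lt] at hside
    obtain ⟨⟨q, hq, hqp⟩, q', hq', hpq'⟩ := hside
    exact hpK i hi (hK.out hq hq' ⟨hqp, hpq'⟩)
  calc #s ≤ _ := card_le_card sides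
    _ ≤ _ := card_union_le _ _
    _ ≤ 1 + 1 := add_le_add left right

/-- The shades that no earlier interval of the level of `I i` meeting `I i` has. -/
def freeShades (i : ℕ) : Set ℕ :=
  {c | ∀ j < i, ktLevel I j = ktLevel I i → ¬ Disjoint (I j) (I i) → ktShade I j ≠ c}

lemma ktShade_eq (i : ℕ) : ktShade I i = sInf (freeShades I i) := by
  rw [ktShade, firstFit, ← ktShade]
  simp only [Fin.forall_iff, freeShades]

variable [LinearOrder X] {I}

lemma exists_mem_freeShades (hI : ∀ i, (I i).OrdConnected) (i : ℕ) :
    ∃ c ∈ freeShades I i, c < 3 := by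
  classical
  let rivals : Finset ℕ := {j ∈ range i | ktLevel I j = ktLevel I i ∧ ¬ Disjoint (I j) (I i)}
  have mem_rivals : ∀ j, j ∈ rivals ↔
      j < i ∧ ktLevel I j = ktLevel I i ∧ ¬ Disjoint (I j) (I i) := by simp [rivals]
  have card_rivals : #rivals ≤ 2 := by
    have nonempty : ∀ j ∈ rivals, (I j).Nonempty := fun j hj =>
      (Set.not_disjoint_iff_nonempty_inter.1 ((mem_rivals j).1 hj).2.2).left
    obtain hempty | ⟨j₀, hj₀⟩ := rivals.eq_empty_or_nonempty
    · simp [hempty]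
    have : Nonempty X := ⟨(nonempty j₀ hj₀).some⟩
    choose! p hp hpriv using fun j hj => exists_private_point I (nonempty j hj)
    refine card_le_two_of_private_points (p := p) (fun j _ => hI j) (hI i)
      (fun j hj => ((mem_rivals j).1 hj).2.2) hp ?_ ?_
    · intro j hj
      obtain ⟨hlt, hl, -⟩ := (mem_rivals j).1 hj
      exact hpriv j hj i hlt.ne' hl.symm
    · intro j hj k hk hkj
      exact hpriv j hj k hkj (((mem_rivals k).1 hk).2.1.trans ((mem_rivals j).1 hj).2.1.symm)
  obtain ⟨c, hc, hfree⟩ := exists_mem_notMem_of_card_lt_card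
    ((card_image_le (f := ktShade I)).trans_lt
      (card_rivals.trans_lt (by simp : 2 < #(range 3))))
  exact ⟨c, fun j hj hl hd hjc =>
    hfree (mem_image.2 ⟨j, (mem_rivals j).2 ⟨hj, hl, hd⟩, hjc⟩), mem_range.1 hc⟩

lemma ktShade_lt_three (hI : ∀ i, (I i).OrdConnected) (i : ℕ) : ktShade I i < 3 := by
  obtain ⟨c, hfree, hc⟩ := exists_mem_freeShades hI i
  rw [ktShade_eq]
  exact (Nat.sInf_le hfree).trans_lt hc

lemma ktShade_ne (hI : ∀ i, (I i).OrdConnected) {i j : ℕ} (hji : j < i)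
    (hl : ktLevel I j = ktLevel I i) (hd : ¬ Disjoint (I j) (I i)) :
    ktShade I j ≠ ktShade I i := by
  obtain ⟨c, hfree, -⟩ := exists_mem_freeShades hI i
  have h := Nat.sInf_mem ⟨c, hfree⟩
  rw [← ktShade_eq] at h
  exact h j hji hl hd

lemma ktColour_lt (hI : ∀ i, (I i).OrdConnected) {N ω : ℕ}
    (hω : ∀ p, #(coverers I N (fun _ => True) p) ≤ ω) {i : ℕ} (hiN : i < N) (hi : (I i).Nonempty) :
    ktColour I i < 3 * ω := by
  have level := ktLevel_lt I hω hiN hi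
  have shade := ktShade_lt_three hI i
  rw [ktColour]
  omega

lemma disjoint_of_ktColour_eq (hI : ∀ i, (I i).OrdConnected) {i j : ℕ} (hij : i ≠ j)
    (hc : ktColour I i = ktColour I j) : Disjoint (I i) (I j) := by
  have shade_i := ktShade_lt_three hI i
  have shade_j := ktShade_lt_three hI j
  rw [ktColour, ktColour] at hc
  have level : ktLevel I i = ktLevel I j := by omega
  have shade : ktShade I i = ktShade I j := by omega
  by_contra hd
  rcases hij.lt_or_gt with h | h
  · exact ktShade_ne hI h level hd shade
  · exact ktShade_ne hI h level.symm (fun hd' => hd hd'.symm) shade.symm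

end IntervalColouring

/-! ### Quadtree cells -/

/-- A cell of the quadtree forest whose roots are the bins `0, 1, 2, …`. The cells of each level are
numbered along a Z-curve: the children of the cell `n` are the cells `4 n, …, 4 n + 3` of the next
level. -/
structure QuadCell where
  level : ℕ
  number : ℕ

namespace QuadCell

/-- The number of the cell of level `j` that contains `c`; meaningful for `j ≤ c.level`. In
particular `c.ancestor 0` is the bin containing `c`. -/
def ancestor (c : QuadCell) (j : ℕ) : ℕ := c.number / 4 ^ (c.level - j)

/-- One of the two cells contains the other. -/
def Nested (c d : QuadCell) : Prop :=
  c.ancestor (min c.level d.level) = d.ancestor (min c.level d.level)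

lemma ancestor_level (c : QuadCell) : c.ancestor c.level = c.number := by
  simp [ancestor]

lemma ancestor_div (c : QuadCell) {i j : ℕ} (hij : i ≤ j) (hj : j ≤ c.level) :
    c.ancestor j / 4 ^ (j - i) = c.ancestor i := by
  rw [ancestor, ancestor, Nat.div_div_eq_div_mul, ← pow_add]
  congr 2
  omega

lemma Nested.symm {c d : QuadCell} (h : c.Nested d) : d.Nested c := by
  rw [Nested, min_comm]
  exact Eq.symm h

lemma Nested.ancestor_eq {c d : QuadCell} (h : c.Nested d) {j : ℕ} (hc : j ≤ c.level)
    (hd : j ≤ d.level) : c.ancestor j = d.ancestor j := by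
  rw [← c.ancestor_div (le_min hc hd) (min_le_left _ _), h, d.ancestor_div (le_min hc hd)
    (min_le_right _ _)]

lemma nested_of_ancestor_eq {c d : QuadCell} (hcd : c.level ≤ d.level)
    (h : d.ancestor c.level = c.number) : c.Nested d := by
  rw [Nested, min_eq_left hcd, ancestor_level, h]

open scoped Classical in
/-- The numbers of the cells of level `j` that contain a cell of `C`. -/
noncomputable def touched (C : Finset QuadCell) (j : ℕ) : Finset ℕ :=
  {c ∈ C | j ≤ c.level}.image (ancestor · j)

lemma mem_touched {C : Finset QuadCell} {j m : ℕ} :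
    m ∈ touched C j ↔ ∃ c ∈ C, j ≤ c.level ∧ c.ancestor j = m := by
  simp [touched, and_assoc]

/-- A set of cells, no two of them nested, each of which is leftmost in the sense that no earlier
cell of its level could be added to the set. -/
structure IsLeftmost (C : Finset QuadCell) : Prop where
  not_nested : ∀ ⦃c⦄, c ∈ C → ∀ ⦃d⦄, d ∈ C → c ≠ d → ¬ c.Nested d
  exists_nested : ∀ ⦃c⦄, c ∈ C → ∀ n < c.number, ∃ d ∈ C, Nested ⟨c.level, n⟩ d

lemma IsLeftmost.exists_coarser_of_notMem_touched {C : Finset QuadCell} (hC : IsLeftmost C)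
    {c : QuadCell} (hc : c ∈ C) {j m : ℕ} (hj : j ≤ c.level) (hlt : m < c.ancestor j)
    (hm : m ∉ touched C j) :
    ∃ d ∈ C, d.level < j ∧ ancestor ⟨j, m⟩ d.level = d.number := by
  let e : QuadCell := ⟨c.level, m * 4 ^ (c.level - j)⟩
  have e_ancestor : e.ancestor j = m := Nat.mul_div_cancel m (by positivity)
  have e_lt : e.number < c.number := Nat.lt_of_div_lt_div (e_ancestor.trans_lt hlt)
  obtain ⟨d, hd, hed⟩ := hC.exists_nested hc _ e_lt
  have d_lt : d.level < j := by
    by_contra! hjd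
    exact hm (mem_touched.2 ⟨d, hd, hjd, (hed.ancestor_eq hj hjd).symm.trans e_ancestor⟩)
  have e_ancestor_d : e.ancestor d.level = d.ancestor d.level :=
    hed.ancestor_eq (d_lt.le.trans hj) le_rfl
  refine ⟨d, hd, d_lt, ?_⟩
  rw [← d.ancestor_level, ← e_ancestor_d, ← e.ancestor_div d_lt.le hj, e_ancestor, ancestor]

/-- By leftmost allocation, all free children of cells that are split lie in a single one. -/
lemma IsLeftmost.div_four_le_of_notMem_touched {C : Finset QuadCell} (hC : IsLeftmost C)
    {j m m' : ℕ} (hm : m ∉ touched C (j + 1)) (hsplit : m / 4 ∈ (touched C (j + 1)).image (· / 4))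
    (hsplit' : m' / 4 ∈ (touched C (j + 1)).image (· / 4)) : m' / 4 ≤ m / 4 := by
  by_contra! hlt
  obtain ⟨_, htouch', hdiv'⟩ := mem_image.1 hsplit'
  obtain ⟨c, hc, hjc, rfl⟩ := mem_touched.1 htouch'
  obtain ⟨_, htouch, hdiv⟩ := mem_image.1 hsplit
  obtain ⟨b, hb, hjb, rfl⟩ := mem_touched.1 htouch
  obtain ⟨d, hd, hdj, hdm⟩ := hC.exists_coarser_of_notMem_touched hc hjc (by omega) hm
  have b_ancestor : b.ancestor d.level = d.number := by
    have hpow : j + 1 - d.level = 1 + (j - d.level) := by omega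
    rw [← hdm, ← b.ancestor_div hdj.le hjb, hpow, pow_add, pow_one, ← Nat.div_div_eq_div_mul, hdiv,
      ancestor, hpow, pow_add, pow_one, ← Nat.div_div_eq_div_mul]
  refine hC.not_nested hd hb (fun h => ?_) (nested_of_ancestor_eq (hdj.le.trans hjb) b_ancestor)
  exact (hdj.trans_le hjb).ne (congrArg level h)

end QuadCell

lemma four_mul_card_image_div_four_le {G : Finset ℕ}
    (h : ∀ m ∉ G, m / 4 ∈ G.image (· / 4) → ∀ m' ∉ G, m' / 4 ∈ G.image (· / 4) → m / 4 = m' / 4) :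
    4 * #(G.image (· / 4)) ≤ #G + 4 := by
  obtain ⟨P, hP⟩ : ∃ P, ∀ m, m / 4 ∈ G.image (· / 4) → m / 4 ≠ P → m ∈ G := by
    by_cases hfull : ∃ m ∉ G, m / 4 ∈ G.image (· / 4)
    · obtain ⟨m, hm, hmF⟩ := hfull
      exact ⟨m / 4, fun m' hm'F hne => by_contra fun hm' => hne (h m' hm' hm'F m hm hmF)⟩
    · push Not at hfull
      exact ⟨0, fun m hmF _ => by_contra fun hm => hfull m hm hmF⟩
  have card_le : #((G.image (· / 4)).erase P ×ˢ range 4) ≤ #G := by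
    refine card_le_card_of_injOn (fun p => 4 * p.1 + p.2) (fun p hp => ?_)
      fun p hp p' hp' hpp' => ?_
    · obtain ⟨⟨hne, hmem⟩, hlt⟩ : (p.1 ≠ P ∧ p.1 ∈ G.image (· / 4)) ∧ p.2 < 4 := by
        simpa only [mem_coe, mem_product, mem_erase, mem_range] using hp
      have hdiv : (4 * p.1 + p.2) / 4 = p.1 := by omega
      exact hP _ (by rwa [hdiv]) (by rwa [hdiv])
    · have hlt := mem_range.1 (mem_product.1 hp).2
      have hlt' := mem_range.1 (mem_product.1 hp').2
      ext <;> dsimp only at hpp' <;> omega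
  rw [card_product, card_range] at card_le
  have := pred_card_le_card_erase (s := G.image (· / 4)) (a := P)
  omega

namespace QuadCell

lemma card_touched_le (C : Finset QuadCell) (j : ℕ) :
    #(touched C j) ≤ #{c ∈ C | c.level = j} + #((touched C (j + 1)).image (· / 4)) := by
  classical
  have cover : touched C j ⊆
      {c ∈ C | c.level = j}.image number ∪ (touched C (j + 1)).image (· / 4) := by
    intro m hm
    obtain ⟨c, hc, hjc, rfl⟩ := mem_touched.1 hm
    rcases hjc.eq_or_lt with rfl | hlt
    · exact mem_union_left _ (mem_image.2 ⟨c, mem_filter.2 ⟨hc, rfl⟩, c.ancestor_level.symm⟩)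
    · refine mem_union_right _ (mem_image.2 ⟨_, mem_touched.2 ⟨c, hc, hlt, rfl⟩, ?_⟩)
      simpa using c.ancestor_div j.le_succ hlt
  exact (card_le_card cover).trans ((card_union_le _ _).trans (by gcongr; exact card_image_le))

lemma IsLeftmost.card_touched_le {C : Finset QuadCell} (hC : IsLeftmost C) (j : ℕ) :
    (#(touched C j) : ℝ) ≤ #{c ∈ C | c.level = j} + #(touched C (j + 1)) / 4 + 1 := by
  have step := QuadCell.card_touched_le C j
  have waste := four_mul_card_image_div_four_le (G := touched C (j + 1)) fun m hm hsplit m' hm'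
    hsplit' => le_antisymm (hC.div_four_le_of_notMem_touched hm' hsplit' hsplit)
      (hC.div_four_le_of_notMem_touched hm hsplit hsplit')
  have : 4 * #(touched C j) ≤ 4 * #{c ∈ C | c.level = j} + #(touched C (j + 1)) + 4 := by omega
  have : (4 * #(touched C j) : ℝ) ≤ 4 * #{c ∈ C | c.level = j} + #(touched C (j + 1)) + 4 := by
    exact_mod_cast this
  linarith

/-- At each level the waste is at most one cell; `4 / 3` is the sum of these areas. -/
lemma IsLeftmost.card_bins_le {C : Finset QuadCell} (hC : IsLeftmost C) :
    (#(touched C 0) : ℝ) ≤ ∑ c ∈ C, (1 / 4 : ℝ) ^ c.level + 4 / 3 := by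
  suffices key : ∀ j ≤ C.sup level + 1, #(touched C j) * (1 / 4 : ℝ) ^ j ≤
      ∑ c ∈ C with j ≤ c.level, (1 / 4 : ℝ) ^ c.level + 4 / 3 * (1 / 4) ^ j by
    simpa using key 0 (Nat.zero_le _)
  intro j hj
  induction hj using Nat.decreasingInduction with
  | self =>
    have untouched : touched C (C.sup level + 1) = ∅ :=
      eq_empty_of_forall_notMem fun m hm => by
        obtain ⟨c, hc, hle, -⟩ := mem_touched.1 hm
        exact (Nat.lt_of_succ_le hle).not_ge (le_sup hc)
    rw [untouched, card_empty, Nat.cast_zero, zero_mul]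
    positivity
  | of_succ j _ ih =>
    have split : ∑ c ∈ C with j ≤ c.level, (1 / 4 : ℝ) ^ c.level =
        #{c ∈ C | c.level = j} * (1 / 4 : ℝ) ^ j +
          ∑ c ∈ C with j + 1 ≤ c.level, (1 / 4 : ℝ) ^ c.level := by
      rw [← sum_filter_add_sum_filter_not {c ∈ C | j ≤ c.level} (fun c => c.level = j),
        filter_filter, filter_filter, ← nsmul_eq_mul, ← sum_const]
      congr 1
      · refine sum_congr (filter_congr fun c _ => ?_) fun c hc => ?_
        · omega
        · rw [(mem_filter.1 hc).2]
      · exact sum_congr (filter_congr fun c _ => by omega) fun _ _ => rfl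
    have step := mul_le_mul_of_nonneg_right (hC.card_touched_le j)
      (by positivity : (0 : ℝ) ≤ (1 / 4) ^ j)
    rw [pow_succ] at ih
    rw [split]
    linarith

end QuadCell

section Allocation

open QuadCell

variable {κ : Type*} (lev : κ → ℕ)

/-- The online allocation of cells to requests. A request is a key `k`, asking for a cell of level
`lev k`, or `none`. Equal keys get the same cell, and a new key gets the leftmost cell that is
not nested with one allocated before. -/
noncomputable def alloc : (ℕ → Option κ) → ℕ → ℕ :=
  firstFit fun _ hist request => {n | ∀ k ∈ request, ∀ j, ∀ k' ∈ (hist j).1,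
    (k' = k → n = (hist j).2) ∧ (k' ≠ k → ¬ Nested ⟨lev k, n⟩ ⟨lev k', (hist j).2⟩)}

lemma isOnline_alloc : IsOnline (alloc lev) := isOnline_firstFit _

variable (x : ℕ → Option κ)

/-- The cell numbers with which the key `k` can be served at time `i`. -/
def freeCells (i : ℕ) (k : κ) : Set ℕ :=
  {n | ∀ j < i, ∀ k' ∈ x j, (k' = k → n = alloc lev x j) ∧
    (k' ≠ k → ¬ Nested ⟨lev k, n⟩ ⟨lev k', alloc lev x j⟩)}

variable {lev x} {i j : ℕ} {k k' : κ}

lemma alloc_eq (hi : k ∈ x i) : alloc lev x i = sInf (freeCells lev x i k) := by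
  rw [alloc, firstFit, ← alloc, Option.mem_def.1 hi]
  simp only [Option.mem_some_iff, forall_eq', Fin.forall_iff, freeCells]

lemma freeCells_nonempty_of_forall_notMem (hnew : ∀ j < i, k ∉ x j) :
    (freeCells lev x i k).Nonempty := by
  let fresh : ℕ := 1 + ∑ j ∈ range i, alloc lev x j
  refine ⟨fresh * 4 ^ lev k, fun j hj k' hk' => ⟨?_, fun _ hnested => ?_⟩⟩
  · rintro rfl
    exact (hnew j hj hk').elim
  · have same_bin := hnested.ancestor_eq (Nat.zero_le _) (Nat.zero_le _)
    simp only [ancestor, Nat.sub_zero] at same_bin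
    rw [Nat.mul_div_cancel _ (by positivity)] at same_bin
    have le_number : alloc lev x j / 4 ^ lev k' ≤ alloc lev x j := Nat.div_le_self _ _
    have le_sum : alloc lev x j ≤ ∑ j ∈ range i, alloc lev x j :=
      single_le_sum (fun _ _ => Nat.zero_le _) (mem_range.2 hj)
    omega

lemma alloc_mem_freeCells (hi : k ∈ x i) : alloc lev x i ∈ freeCells lev x i k := by
  induction i using Nat.strong_induction_on generalizing k with
  | _ i ih =>
    rw [alloc_eq hi]
    refine Nat.sInf_mem ?_
    by_cases hnew : ∀ j < i, k ∉ x j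
    · exact freeCells_nonempty_of_forall_notMem hnew
    · push Not at hnew
      obtain ⟨j, hj, hkj⟩ := hnew
      refine ⟨alloc lev x j, fun j' hj' k' hk' => ?_⟩
      rcases lt_trichotomy j' j with h | rfl | h
      · exact ih j hj hkj j' h k' hk'
      · exact ⟨fun _ => rfl, fun hne => (hne (Option.mem_unique hk' hkj)).elim⟩
      · obtain ⟨same, other⟩ := ih j' hj' hk' j h k hkj
        exact ⟨fun h => (same h.symm).symm, fun h hn => other h.symm hn.symm⟩

lemma alloc_eq_alloc (hi : k ∈ x i) (hj : k ∈ x j) : alloc lev x i = alloc lev x j := by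
  rcases lt_trichotomy i j with h | rfl | h
  · exact ((alloc_mem_freeCells hj i h k hi).1 rfl).symm
  · rfl
  · exact (alloc_mem_freeCells hi j h k hj).1 rfl

lemma not_nested_alloc (hi : k ∈ x i) (hj : k' ∈ x j) (hne : k ≠ k') :
    ¬ Nested ⟨lev k, alloc lev x i⟩ ⟨lev k', alloc lev x j⟩ := by
  rcases lt_trichotomy i j with h | rfl | h
  · exact fun hn => (alloc_mem_freeCells hj i h k hi).2 hne hn.symm
  · exact (hne (Option.mem_unique hi hj)).elim
  · exact (alloc_mem_freeCells hi j h k' hj).2 hne.symm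

lemma exists_nested_of_lt_alloc (hi : k ∈ x i) {n : ℕ} (hn : n < alloc lev x i) :
    ∃ j ≤ i, ∃ k' ∈ x j, Nested ⟨lev k, n⟩ ⟨lev k', alloc lev x j⟩ := by
  induction i using Nat.strong_induction_on with
  | _ i ih =>
    have not_free : n ∉ freeCells lev x i k := Nat.notMem_of_lt_sInf (alloc_eq hi ▸ hn)
    simp only [freeCells, Set.mem_ofPred_eq, not_forall, not_and_or, not_not] at not_free
    obtain ⟨j, hj, k', hk', ⟨rfl, -⟩ | ⟨-, hnested⟩⟩ := not_free
    · obtain ⟨j', hj', h⟩ := ih j hj hk' (alloc_eq_alloc hi hk' ▸ hn)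
      exact ⟨j', hj'.trans hj.le, h⟩
    · exact ⟨j, hj.le, k', hk', hnested⟩

variable (lev x) in
open scoped Classical in
/-- The cells allocated to the first `N` requests. -/
noncomputable def allocated (N : ℕ) : Finset QuadCell :=
  (range N).biUnion fun i => ((x i).map fun k => ⟨lev k, alloc lev x i⟩).toFinset

lemma mem_allocated {N : ℕ} {c : QuadCell} :
    c ∈ allocated lev x N ↔ ∃ i < N, ∃ k ∈ x i, ⟨lev k, alloc lev x i⟩ = c := by
  simp [allocated]

lemma isLeftmost_allocated (N : ℕ) : IsLeftmost (allocated lev x N) where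
  not_nested := by
    rintro _ hc _ hd hne
    obtain ⟨i, -, k, hk, rfl⟩ := mem_allocated.1 hc
    obtain ⟨j, -, k', hk', rfl⟩ := mem_allocated.1 hd
    refine not_nested_alloc hk hk' ?_
    rintro rfl
    exact hne (by rw [alloc_eq_alloc hk hk'])
  exists_nested := by
    rintro _ hc n hn
    obtain ⟨i, hi, k, hk, rfl⟩ := mem_allocated.1 hc
    obtain ⟨j, hj, k', hk', hnested⟩ := exists_nested_of_lt_alloc hk hn
    exact ⟨_, mem_allocated.2 ⟨j, hj.trans_lt hi, k', hk', rfl⟩, hnested⟩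

lemma sum_allocated_le {N : ℕ} {K : Finset κ} (hK : ∀ i < N, ∀ k ∈ x i, k ∈ K) {f : ℕ → ℝ}
    (hf : ∀ n, 0 ≤ f n) : ∑ c ∈ allocated lev x N, f c.level ≤ ∑ k ∈ K, f (lev k) := by
  classical
  have exists_cell : ∀ k, ∃ n, ∀ i, k ∈ x i → alloc lev x i = n := fun k => by
    by_cases hk : ∃ i, k ∈ x i
    · exact ⟨_, fun j hj => alloc_eq_alloc hj hk.choose_spec⟩
    · exact ⟨0, fun i hi => (hk ⟨i, hi⟩).elim⟩
  choose cell hcell using exists_cell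
  have subset : allocated lev x N ⊆ K.image fun k => ⟨lev k, cell k⟩ := fun c hc => by
    obtain ⟨i, hi, k, hk, rfl⟩ := mem_allocated.1 hc
    exact mem_image.2 ⟨k, hK i hi k hk, by rw [hcell k i hk]⟩
  exact (sum_le_sum_of_subset_of_nonneg subset fun c _ _ => hf c.level).trans
    (sum_image_le_of_nonneg fun c _ => hf c.level)

end Allocation

/-! ### Geometry of translated L-shapes -/

section LShapeGeometry

variable {L : LShape} {v : ℝ × ℝ}

lemma planeTranslate_toSet (L : LShape) (v : ℝ × ℝ) : planeTranslate v L.toSet =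
    Set.Icc v ((L.lx, L.wy) + v) ∪ Set.Icc v ((L.wx, L.ly) + v) := by
  rw [planeTranslate, LShape.toSet, Set.image_union, Set.image_add_const_Icc,
    Set.image_add_const_Icc, Prod.mk_zero_zero, zero_add]

lemma LShape.IsValid.planeTranslate_subset_Icc (hL : L.IsValid) (v : ℝ × ℝ) :
    planeTranslate v L.toSet ⊆ Set.Icc v ((L.lx, L.ly) + v) := by
  obtain ⟨-, hwl, -, -, hwl', -⟩ := hL
  rw [planeTranslate_toSet]
  refine Set.union_subset (Set.Icc_subset_Icc_right ?_) (Set.Icc_subset_Icc_right ?_) <;> gcongr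

lemma LShape.IsValid.planeTranslate_subset_unitBin_iff (hL : L.IsValid) :
    planeTranslate v L.toSet ⊆ unitBin ↔ 0 ≤ v ∧ (L.lx, L.ly) + v ≤ 1 := by
  refine ⟨fun h => ?_, fun ⟨h0, h1⟩ =>
    (hL.planeTranslate_subset_Icc v).trans (Set.Icc_subset_Icc h0 h1)⟩
  obtain ⟨hw, hwl, -, hw', hwl', -⟩ := hL
  have hlx : (0, 0) ≤ (L.lx, L.wy) := ⟨hw.trans hwl, hw'⟩
  have hly : (0, 0) ≤ (L.wx, L.ly) := ⟨hw, hw'.trans hwl'⟩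
  rw [planeTranslate_toSet, Set.union_subset_iff, unitBin,
    Set.Icc_subset_Icc_iff (le_add_of_nonneg_left hlx),
    Set.Icc_subset_Icc_iff (le_add_of_nonneg_left hly)] at h
  exact ⟨h.1.1, h.1.2.1, h.2.2.2⟩

lemma interior_Ici_prod (a : ℝ × ℝ) : interior (Set.Ici a) = Set.Ioi a.1 ×ˢ Set.Ioi a.2 := by
  rw [← Prod.mk.eta (p := a), ← Set.Ici_prod_Ici, interior_prod_eq, interior_Ici, interior_Ici]

lemma disjoint_interior_of_nested (L L' : LShape) {v v' : ℝ × ℝ} (h : (L.wx, L.wy) + v ≤ v') :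
    Disjoint (interior (planeTranslate v L.toSet)) (interior (planeTranslate v' L'.toSet)) := by
  refine Set.disjoint_left.2 fun p hp hp' => ?_
  have subset_Ici : planeTranslate v' L'.toSet ⊆ Set.Ici v' := by
    rw [planeTranslate_toSet]
    exact Set.union_subset Set.Icc_subset_Ici_self Set.Icc_subset_Ici_self
  obtain ⟨hx, hy⟩ : v'.1 < p.1 ∧ v'.2 < p.2 := by
    simpa only [interior_Ici_prod, Set.mem_prod, Set.mem_Ioi] using interior_mono subset_Ici hp'
  rcases planeTranslate_toSet L v ▸ interior_subset hp with hmem | hmem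
  · exact (h.2.trans_lt hy).not_ge hmem.2.2
  · exact (h.1.trans_lt hx).not_ge hmem.2.1

lemma horizontalArm_subset_interior (L : LShape) (v : ℝ × ℝ) :
    Set.Ioo v.1 (v.1 + L.lx) ×ˢ Set.Ioo v.2 (v.2 + L.wy) ⊆
      interior (planeTranslate v L.toSet) := by
  refine interior_maximal (fun p ⟨hx, hy⟩ => ?_) (isOpen_Ioo.prod isOpen_Ioo)
  rw [planeTranslate_toSet, add_comm]
  exact Or.inl ⟨⟨hx.1.le, hy.1.le⟩, hx.2.le, hy.2.le⟩

lemma verticalArm_subset_interior (L : LShape) (v : ℝ × ℝ) :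
    Set.Ioo v.1 (v.1 + L.wx) ×ˢ Set.Ioo v.2 (v.2 + L.ly) ⊆
      interior (planeTranslate v L.toSet) := by
  refine interior_maximal (fun p ⟨hx, hy⟩ => ?_) (isOpen_Ioo.prod isOpen_Ioo)
  rw [planeTranslate_toSet, add_comm _ v, add_comm _ v]
  exact Or.inr ⟨⟨hx.1.le, hy.1.le⟩, hx.2.le, hy.2.le⟩

end LShapeGeometry

lemma sum_measureReal_le_of_pairwiseDisjoint {Ω ι : Type*} [MeasurableSpace Ω] {μ : Measure Ω}
    {s : Finset ι} {S : ι → Set Ω} {T : Set Ω} (hdisj : (s : Set ι).PairwiseDisjoint S)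
    (hmeas : ∀ i ∈ s, MeasurableSet (S i)) (hsub : ∀ i ∈ s, S i ⊆ T) (hT : μ T ≠ ⊤) :
    ∑ i ∈ s, μ.real (S i) ≤ μ.real T := by
  have finite : ∀ i ∈ s, μ (S i) ≠ ⊤ := fun i hi => measure_ne_top_of_subset (hsub i hi) hT
  rw [← measureReal_biUnion_finset hdisj hmeas finite]
  exact measureReal_mono (Set.iUnion₂_subset hsub) hT

/-! ### Lower bounds for the offline optimum -/

section LowerBounds

variable {ι : Type*} {L : ι → LShape} {s t : Finset ι}

/-- The items `L i` with `i ∈ s` can be packed together into one unit bin. -/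
def FitsInBin (L : ι → LShape) (s : Finset ι) : Prop :=
  ∃ v : ι → ℝ × ℝ, (∀ i ∈ s, planeTranslate (v i) (L i).toSet ⊆ unitBin) ∧
    (s : Set ι).PairwiseDisjoint fun i => interior (planeTranslate (v i) (L i).toSet)

/-- The items `L i` with `i ∈ s` can be packed into `m` unit bins. -/
def FitInBins (L : ι → LShape) (s : Finset ι) (m : ℕ) : Prop :=
  ∃ bin : ι → ℕ, (∀ i ∈ s, bin i < m) ∧ ∀ b, FitsInBin L {i ∈ s | bin i = b}

lemma FitsInBin.mono (h : FitsInBin L s) (hts : t ⊆ s) : FitsInBin L t := by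
  obtain ⟨v, hsub, hdisj⟩ := h
  exact ⟨v, fun i hi => hsub i (hts hi), hdisj.subset (coe_subset.2 hts)⟩

lemma FitInBins.mono {m : ℕ} (h : FitInBins L s m) (hts : t ⊆ s) : FitInBins L t m := by
  obtain ⟨bin, hbin, hfit⟩ := h
  exact ⟨bin, fun i hi => hbin i (hts hi), fun b => (hfit b).mono (filter_subset_filter _ hts)⟩

lemma FitInBins.sum_le {m : ℕ} (h : FitInBins L s m) {f : ι → ℝ} {B : ℝ}
    (hB : ∀ t ⊆ s, FitsInBin L t → ∑ i ∈ t, f i ≤ B) : ∑ i ∈ s, f i ≤ m * B := by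
  obtain ⟨bin, hbin, hfit⟩ := h
  calc ∑ i ∈ s, f i = ∑ b ∈ range m, ∑ i ∈ s with bin i = b, f i :=
        (sum_fiberwise_of_maps_to (fun i hi => mem_range.2 (hbin i hi)) f).symm
    _ ≤ ∑ _b ∈ range m, B := sum_le_sum fun b _ => hB _ (filter_subset _ _) (hfit b)
    _ = m * B := by rw [sum_const, card_range, nsmul_eq_mul]

lemma FitsInBin.sum_area_le_one (h : FitsInBin L s) (hL : ∀ i ∈ s, (L i).IsValid) :
    ∑ i ∈ s, (L i).lx * (L i).wy ≤ 1 := by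
  obtain ⟨v, hsub, hdisj⟩ := h
  let arm : ι → Set (ℝ × ℝ) := fun i =>
    Set.Ioo (v i).1 ((v i).1 + (L i).lx) ×ˢ Set.Ioo (v i).2 ((v i).2 + (L i).wy)
  have arm_subset : ∀ i, arm i ⊆ interior (planeTranslate (v i) (L i).toSet) :=
    fun i => horizontalArm_subset_interior (L i) (v i)
  have area_arm : ∀ i ∈ s, volume.real (arm i) = (L i).lx * (L i).wy := fun i hi => by
    obtain ⟨hw, hwl, -, hw', -⟩ := hL i hi
    rw [Measure.volume_eq_prod, measureReal_prod_prod, Real.volume_real_Ioo_of_le (by linarith),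
      Real.volume_real_Ioo_of_le (by linarith), add_sub_cancel_left, add_sub_cancel_left]
  have area_unitBin : volume unitBin = 1 := by
    rw [unitBin, ← Set.Icc_prod_Icc, Measure.volume_eq_prod, Measure.prod_prod, Real.volume_Icc]
    simp
  calc ∑ i ∈ s, (L i).lx * (L i).wy = ∑ i ∈ s, volume.real (arm i) :=
        (sum_congr rfl area_arm).symm
    _ ≤ volume.real unitBin := by
        refine sum_measureReal_le_of_pairwiseDisjoint (hdisj.mono arm_subset)
          (fun i _ => measurableSet_Ioo.prod measurableSet_Ioo)
          (fun i hi => ((arm_subset i).trans interior_subset).trans (hsub i hi)) ?_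
        rw [area_unitBin]
        exact ENNReal.one_ne_top
    _ = 1 := by rw [measureReal_def, area_unitBin, ENNReal.toReal_one]

/-- The vertical arms of the items all cross the line `y = 1 / 2`, where they are disjoint. -/
lemma FitsInBin.sum_le_of_long (h : FitsInBin L s) (hL : ∀ i ∈ s, (L i).IsValid)
    (hlong : ∀ i ∈ s, 1 / 2 < (L i).ly) {q : ι → ℝ} {R : ℝ} (hR : 0 ≤ R)
    (hq0 : ∀ i ∈ s, 0 ≤ q i) (hqw : ∀ i ∈ s, q i ≤ (L i).wx)
    (hqR : ∀ i ∈ s, 1 - (L i).lx + q i ≤ R) : ∑ i ∈ s, q i ≤ R := by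
  obtain ⟨v, hsub, hdisj⟩ := h
  let slice : ι → Set ℝ := fun i => Set.Ioo (v i).1 ((v i).1 + q i)
  have bounds : ∀ i ∈ s, 0 ≤ v i ∧ ((L i).lx, (L i).ly) + v i ≤ 1 :=
    fun i hi => (hL i hi).planeTranslate_subset_unitBin_iff.1 (hsub i hi)
  have slice_interior : ∀ i ∈ s, ∀ x ∈ slice i,
      (x, 1 / 2) ∈ interior (planeTranslate (v i) (L i).toSet) := by
    intro i hi x hx
    have hy : (L i).ly + (v i).2 ≤ 1 := (bounds i hi).2.2
    have hlong := hlong i hi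
    refine verticalArm_subset_interior (L i) (v i) ⟨⟨hx.1, ?_⟩, ?_, ?_⟩
    · linarith [hx.2, hqw i hi]
    · change (v i).2 < 1 / 2
      linarith
    · change 1 / 2 < (v i).2 + (L i).ly
      linarith [show 0 ≤ (v i).2 from (bounds i hi).1.2]
  have slice_subset : ∀ i ∈ s, slice i ⊆ Set.Icc 0 R := fun i hi x hx => by
    have hx0 : 0 ≤ (v i).1 := (bounds i hi).1.1
    have hx1 : (L i).lx + (v i).1 ≤ 1 := (bounds i hi).2.1
    exact ⟨by linarith [hx.1], by linarith [hx.2, hqR i hi]⟩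
  calc ∑ i ∈ s, q i = ∑ i ∈ s, volume.real (slice i) := sum_congr rfl fun i hi => by
        rw [Real.volume_real_Ioo_of_le (by linarith [hq0 i hi]), add_sub_cancel_left]
    _ ≤ volume.real (Set.Icc 0 R) := by
        refine sum_measureReal_le_of_pairwiseDisjoint (fun i hi j hj hij => ?_)
          (fun i _ => measurableSet_Ioo) slice_subset (by simp)
        exact Set.disjoint_left.2 fun x hxi hxj => Set.disjoint_left.1 (hdisj hi hj hij)
          (slice_interior i hi x hxi) (slice_interior j hj x hxj)
    _ = R := by rw [Real.volume_real_Icc_of_le hR, sub_zero]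

/-- If `q` is the least width of the items then `1 - lx < 6 * q` for all of them. -/
lemma FitsInBin.card_le_six_of_wide (h : FitsInBin L s) (hL : ∀ i ∈ s, (L i).IsValid)
    (hlong : ∀ i ∈ s, 1 / 2 < (L i).ly) (hwide : ∀ i ∈ s, 1 - (L i).lx < 3 * (L i).wx) {p : ℝ}
    (hp : ∀ i ∈ s, p ∈ Set.Ico (min (1 - (L i).lx) (L i).wx) (2 * (L i).wx)) : #s ≤ 6 := by
  obtain rfl | hs := s.eq_empty_or_nonempty
  · exact Nat.zero_le _
  obtain ⟨i, hi, hmin⟩ := exists_min_image s (fun i => (L i).wx) hs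
  obtain ⟨j, hj, hmax⟩ := exists_max_image s (fun i => 1 - (L i).lx) hs
  have lx_le_one : ∀ k ∈ s, (L k).lx ≤ 1 := fun k hk => (hL k hk).2.2.1
  have w_pos : 0 < (L i).wx := by linarith [hwide i hi, lx_le_one i hi]
  have gap_lt : 1 - (L j).lx < 6 * (L i).wx := by
    rcases min_le_iff.1 (hp j hj).1 with h | h <;> linarith [(hp i hi).2, hwide j hj]
  have total := h.sum_le_of_long hL hlong (q := fun _ => (L i).wx) (R := 1 - (L j).lx + (L i).wx)
    (by linarith [lx_le_one j hj]) (fun _ _ => w_pos.le) hmin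
    (fun k hk => add_le_add_left (hmax k hk) _)
  rw [sum_const, nsmul_eq_mul] at total
  have : (#s : ℝ) < 7 := by
    refine lt_of_mul_lt_mul_right ?_ w_pos.le
    linarith
  exact Nat.lt_succ_iff.1 (by exact_mod_cast this)

end LowerBounds

/-! ### Squares of quadtree cells -/

/-- The lower left corner of the square of the cell `n` of level `k` inside its bin: the two lowest
binary digits of `n` select a quadrant of the parent square. -/
noncomputable def quadCorner : ℕ → ℕ → ℝ × ℝ
  | 0, _ => 0
  | k + 1, n =>
    quadCorner k (n / 4) +
      ((1 / 2 : ℝ) ^ (k + 1) * (n % 2 : ℕ), (1 / 2 : ℝ) ^ (k + 1) * (n / 2 % 2 : ℕ))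

namespace QuadCell

/-- The square, of side length `(1 / 2) ^ c.level`, that the cell `c` occupies in its bin. -/
noncomputable def square (c : QuadCell) : Set (ℝ × ℝ) :=
  Set.Icc (quadCorner c.level c.number)
    (quadCorner c.level c.number + ((1 / 2) ^ c.level, (1 / 2) ^ c.level))

lemma square_zero (n : ℕ) : square ⟨0, n⟩ = unitBin := by
  simp [square, quadCorner, unitBin, Prod.mk_zero_zero]

lemma square_succ_subset (k n : ℕ) : square ⟨k + 1, n⟩ ⊆ square ⟨k, n / 4⟩ := by
  have digit_le : ∀ m : ℕ, ((m % 2 : ℕ) : ℝ) ≤ 1 := fun m => by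
    exact_mod_cast Nat.lt_succ_iff.1 (m.mod_lt two_pos)
  have side_pos : (0 : ℝ) < (1 / 2) ^ (k + 1) := by positivity
  have side : ((1 : ℝ) / 2) ^ k = (1 / 2) ^ (k + 1) + (1 / 2) ^ (k + 1) := by ring
  have hx := mul_le_of_le_one_right side_pos.le (digit_le n)
  have hy := mul_le_of_le_one_right side_pos.le (digit_le (n / 2))
  rw [square, square, quadCorner, add_assoc]
  refine Set.Icc_subset_Icc (le_add_of_nonneg_right (Prod.mk_le_mk.2 ⟨?_, ?_⟩))
    (add_le_add le_rfl (Prod.mk_le_mk.2 ⟨?_, ?_⟩))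
  · positivity
  · positivity
  · linarith
  · linarith

lemma square_subset_square_ancestor (c : QuadCell) {j : ℕ} (hj : j ≤ c.level) :
    c.square ⊆ square ⟨j, c.ancestor j⟩ := by
  induction hj using Nat.decreasingInduction with
  | self => rw [ancestor_level]
  | of_succ j hj ih =>
    have parent : c.ancestor (j + 1) / 4 = c.ancestor j := by
      simpa using c.ancestor_div j.le_succ hj
    exact parent ▸ ih.trans (square_succ_subset j _)

lemma square_subset_unitBin (c : QuadCell) : c.square ⊆ unitBin :=
  square_zero _ ▸ c.square_subset_square_ancestor (Nat.zero_le _)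

lemma disjoint_Ioo_grid (a h : ℝ) {m n : ℕ} (hmn : m ≠ n) :
    Disjoint (Set.Ioo (a + h * m) (a + h * m + h)) (Set.Ioo (a + h * n) (a + h * n + h)) := by
  wlog hlt : m < n generalizing m n
  · exact (this hmn.symm (hmn.lt_or_gt.resolve_left hlt)).symm
  have hcast : (m : ℝ) + 1 ≤ n := by exact_mod_cast hlt
  refine Set.disjoint_left.2 fun x hx hx' => ?_
  have h_pos : 0 < h := by linarith [hx.1, hx.2]
  linarith [hx.2, hx'.1, mul_le_mul_of_nonneg_left hcast h_pos.le]

lemma disjoint_interior_square_of_siblings (k : ℕ) {m n : ℕ} (hmn : m ≠ n) (hdiv : m / 4 = n / 4) :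
    Disjoint (interior (square ⟨k + 1, m⟩)) (interior (square ⟨k + 1, n⟩)) := by
  simp only [square, quadCorner, hdiv, Set.Icc_prod_eq, interior_prod_eq, interior_Icc,
    Set.disjoint_prod]
  by_cases hbit : m % 2 = n % 2
  · exact Or.inr (disjoint_Ioo_grid _ _ (by omega))
  · exact Or.inl (disjoint_Ioo_grid _ _ hbit)

lemma disjoint_interior_square {c d : QuadCell} (hbin : c.ancestor 0 = d.ancestor 0)
    (hcd : ¬ c.Nested d) : Disjoint (interior c.square) (interior d.square) := by
  obtain ⟨j, hj, same, differ⟩ : ∃ j, j + 1 ≤ min c.level d.level ∧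
      c.ancestor j = d.ancestor j ∧ c.ancestor (j + 1) ≠ d.ancestor (j + 1) := by
    by_contra! hstep
    have equal : ∀ j ≤ min c.level d.level, c.ancestor j = d.ancestor j := fun j => by
      induction j with
      | zero => exact fun _ => hbin
      | succ j ih => exact fun hj => hstep j hj (ih (j.le_succ.trans hj))
    exact hcd (equal _ le_rfl)
  have hjc := hj.trans (min_le_left _ _)
  have hjd := hj.trans (min_le_right _ _)
  have parent : c.ancestor (j + 1) / 4 = d.ancestor (j + 1) / 4 := by
    rw [← c.ancestor_div j.le_succ hjc, ← d.ancestor_div j.le_succ hjd] at same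
    simpa using same
  exact (disjoint_interior_square_of_siblings j differ parent).mono
    (interior_mono (c.square_subset_square_ancestor hjc))
    (interior_mono (d.square_subset_square_ancestor hjd))

end QuadCell

/-! ### Filling buckets -/

section Buckets

variable {κ : Type*} (cap : κ → ℝ) (x : ℕ → κ × ℝ)

open scoped Classical in
/-- The total length of the earlier items of the class of the `i`-th item, where an item `x i` is a
pair of a class and a length. -/
noncomputable def load (i : ℕ) : ℝ := ∑ j ∈ range i with (x j).1 = (x i).1, (x j).2

/-- The bucket receiving the `i`-th item when the items of a class `k` are put side by side into
consecutive buckets of length `cap k`, and an item belongs to the bucket containing its left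
end. -/
noncomputable def bucket (i : ℕ) : ℕ := ⌊load x i / cap (x i).1⌋₊

/-- The position of the `i`-th item in its bucket. -/
noncomputable def offset (i : ℕ) : ℝ := load x i - bucket cap x i * cap (x i).1

lemma isOnline_load : IsOnline (load (κ := κ)) := by
  classical
  intro x y i h
  simp only [load]
  refine sum_congr (filter_congr fun j hj => ?_) fun j hj => ?_
  · rw [h j (mem_range.1 hj).le, h i le_rfl]
  · rw [h j (mem_range.1 (mem_filter.1 hj).1).le]

lemma isOnline_bucket : IsOnline (bucket cap) := fun x y i h => by
  rw [bucket, bucket, isOnline_load h, h i le_rfl]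

lemma isOnline_offset : IsOnline (offset cap) := fun x y i h => by
  rw [offset, offset, isOnline_load h, isOnline_bucket cap h, h i le_rfl]

variable {cap x}

lemma load_nonneg (hx : ∀ i, 0 ≤ (x i).2) (i : ℕ) : 0 ≤ load x i := sum_nonneg fun j _ => hx j

open scoped Classical in
lemma load_le_sum (hx : ∀ i, 0 ≤ (x i).2) {i N : ℕ} (hi : i ≤ N) :
    load x i ≤ ∑ j ∈ range N with (x j).1 = (x i).1, (x j).2 :=
  sum_le_sum_of_subset_of_nonneg (filter_subset_filter _ (range_subset_range.2 hi))
    fun j _ _ => hx j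

lemma load_add_le (hx : ∀ i, 0 ≤ (x i).2) {i j : ℕ} (hij : i < j) (hclass : (x i).1 = (x j).1) :
    load x i + (x i).2 ≤ load x j := by
  classical
  calc load x i + (x i).2 = ∑ k ∈ insert i {k ∈ range i | (x k).1 = (x i).1}, (x k).2 := by
        rw [load, sum_insert (by simp), add_comm]
    _ ≤ load x j := by
        refine sum_le_sum_of_subset_of_nonneg (fun k hk => ?_) fun k _ _ => hx k
        rw [mem_insert, mem_filter, mem_range] at hk
        rw [mem_filter, mem_range]
        rcases hk with rfl | ⟨hki, hk⟩
        · exact ⟨hij, hclass⟩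
        · exact ⟨hki.trans hij, hk.trans hclass⟩

lemma offset_nonneg (hcap : ∀ k, 0 < cap k) (hx : ∀ i, 0 ≤ (x i).2) (i : ℕ) :
    0 ≤ offset cap x i :=
  sub_nonneg.2 ((le_div_iff₀ (hcap _)).1
    (Nat.floor_le (div_nonneg (load_nonneg hx i) (hcap _).le)))

lemma offset_lt (hcap : ∀ k, 0 < cap k) (i : ℕ) : offset cap x i < cap (x i).1 := by
  have := (div_lt_iff₀ (hcap (x i).1)).1 (Nat.lt_floor_add_one (load x i / cap (x i).1))
  rw [offset, bucket]
  linarith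

lemma offset_add_le (hx : ∀ i, 0 ≤ (x i).2) {i j : ℕ} (hij : i < j)
    (hclass : (x i).1 = (x j).1) (hbucket : bucket cap x i = bucket cap x j) :
    offset cap x i + (x i).2 ≤ offset cap x j := by
  have := load_add_le hx hij hclass
  rw [offset, offset, hbucket, hclass]
  linarith

end Buckets

/-! ### Geometric classes -/

/-- The index of the interval `(y ^ (n + 1), y ^ n]` that contains `x`, for `0 < x ≤ 1` and
`0 < y < 1`. -/
noncomputable def geomClass (y x : ℝ) : ℕ := ⌊Real.logb y x⌋₊

lemma le_pow_geomClass {y x : ℝ} (hy0 : 0 < y) (hy1 : y < 1) (hx0 : 0 < x) (hx1 : x ≤ 1) :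
    x ≤ y ^ geomClass y x := by
  have h := Nat.floor_le (Real.logb_nonneg_of_base_lt_one hy0 hy1 hx0 hx1)
  rwa [Real.le_logb_iff_rpow_le_of_base_lt_one hy0 hy1 hx0, Real.rpow_natCast] at h

lemma pow_geomClass_succ_lt {y x : ℝ} (hy0 : 0 < y) (hy1 : y < 1) (hx0 : 0 < x) :
    y ^ (geomClass y x + 1) < x := by
  have h := Nat.lt_floor_add_one (Real.logb y x)
  rwa [Real.logb_lt_iff_lt_rpow_of_base_lt_one hy0 hy1 hx0, ← Nat.cast_add_one,
    Real.rpow_natCast] at h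

/-! ### The algorithm -/

/-- The kinds of items that the algorithm distinguishes. All items of a kind are treated alike, and
items of different constructors never share a bin. -/
inductive Kind
  | zero
  | wide
  | narrow (z : ℕ)
  | small (k : ℕ)

namespace LShape

/-- A valid L-shape that is symmetric about the diagonal. -/
def IsSymm (L : LShape) : Prop := L.IsValid ∧ L.lx = L.ly ∧ L.wx = L.wy

/-- The kind of an item: it is small if its arms have length at most `1 / 2`, and long items are
narrow if the gap `1 - L.lx` that the bin leaves is at least three times their width. -/
noncomputable def kind (L : LShape) : Kind :=
  if L.wx = 0 then .zero
  else if L.lx ≤ 1 / 2 then .small (geomClass (1 / 2) (2 * L.lx))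
  else if 1 - L.lx < 3 * L.wx then .wide
  else .narrow (geomClass (1 / 3) (1 - L.lx))

/-- The defining property of the items of a kind. -/
def HasKind (L : LShape) : Kind → Prop
  | .zero => L.wx = 0
  | .wide => 1 / 2 < L.lx ∧ 1 - L.lx < 3 * L.wx
  | .narrow z => 1 / 2 < L.lx ∧ L.wx ≤ (1 / 3) ^ (z + 1) ∧ (1 / 3) ^ (z + 1) < 1 - L.lx ∧
      1 - L.lx ≤ (1 / 3) ^ z
  | .small k => (1 / 2) ^ (k + 2) < L.lx ∧ L.lx ≤ (1 / 2) ^ (k + 1)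

variable {L L' : LShape}

lemma IsSymm.hasKind_kind (hL : L.IsSymm) : L.HasKind L.kind := by
  obtain ⟨hw, hwl, -⟩ := hL.1
  unfold kind
  split_ifs with hzero hsmall hwide
  · exact hzero
  · have pos : 0 < 2 * L.lx := by linarith [hw.lt_of_ne' hzero]
    have upper := le_pow_geomClass (by norm_num) one_half_lt_one pos (by linarith)
    have lower := pow_geomClass_succ_lt (by norm_num) one_half_lt_one pos
    constructor
    · rw [pow_succ]
      linarith
    · rw [pow_succ]
      linarith
  · exact ⟨not_le.1 hsmall, hwide⟩
  · have pos : 0 < 1 - L.lx := by linarith [hw.lt_of_ne' hzero]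
    have upper := le_pow_geomClass (y := 1 / 3) (by norm_num) (by norm_num) pos
      (by linarith)
    have lower := pow_geomClass_succ_lt (y := 1 / 3) (by norm_num) (by norm_num) pos
    refine ⟨not_le.1 hsmall, ?_, lower, upper⟩
    rw [pow_succ]
    linarith

lemma IsSymm.subset_unitBin (hL : L.IsSymm) {t : ℝ} (ht : 0 ≤ t) (hlt : L.lx + t ≤ 1) :
    planeTranslate (t, t) L.toSet ⊆ unitBin :=
  hL.1.planeTranslate_subset_unitBin_iff.2 ⟨⟨ht, ht⟩, hlt, hL.2.1 ▸ hlt⟩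

lemma IsSymm.disjoint_interior (hL : L.IsSymm) (v : ℝ × ℝ) {t t' : ℝ} (h : L.wx + t ≤ t') :
    Disjoint (interior (planeTranslate (v + (t, t)) L.toSet))
      (interior (planeTranslate (v + (t', t')) L'.toSet)) := by
  refine disjoint_interior_of_nested L L' ?_
  rw [← hL.2.2, add_left_comm]
  exact add_le_add le_rfl ⟨h, h⟩

/-- The set of positions on the diagonal that a wide item at position `min (1 - L.lx) L.wx` blocks,
generously extended to `2 * L.wx`; it is empty if `L` is not wide. -/
noncomputable def wideInterval (L : LShape) : Set ℝ :=
  match L.kind with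
  | .wide => Set.Ico (min (1 - L.lx) L.wx) (2 * L.wx)
  | _ => ∅

lemma wideInterval_of_kind_eq (h : L.kind = .wide) :
    L.wideInterval = Set.Ico (min (1 - L.lx) L.wx) (2 * L.wx) := by
  rw [wideInterval, h]

lemma kind_eq_of_mem_wideInterval {p : ℝ} (h : p ∈ L.wideInterval) : L.kind = .wide := by
  unfold wideInterval at h
  split at h
  · assumption
  · exact h.elim

lemma ordConnected_wideInterval (L : LShape) : L.wideInterval.OrdConnected := by
  unfold wideInterval
  split
  · exact Set.ordConnected_Ico
  · exact Set.ordConnected_empty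

end LShape

/-- The length of the buckets in which the widths of the items of a kind are gathered. The value is
irrelevant for kinds that are not packed in buckets. -/
noncomputable def Kind.cap : Kind → ℝ
  | .zero => 1
  | .wide => 1
  | .narrow z => (1 / 3) ^ (z + 2)
  | .small k => (1 / 2) ^ (k + 1)

lemma Kind.cap_pos (κ : Kind) : 0 < κ.cap := by
  cases κ <;> simp only [cap] <;> positivity

section Algorithm

variable (f : ℕ → LShape)

/-- The items as inputs of the bucket rule. -/
noncomputable def widths (i : ℕ) : Kind × ℝ := ((f i).kind, (f i).wx)

/-- The request for a cell caused by the `i`-th item: small items of the same kind in the same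
bucket share a cell. -/
noncomputable def cellRequest (i : ℕ) : Option (Σ _ : ℕ, ℕ) :=
  match (f i).kind with
  | .small k => some ⟨k, bucket Kind.cap (widths f) i⟩
  | _ => none

/-- The number of the cell allocated to the `i`-th item. -/
noncomputable def cellNumber (i : ℕ) : ℕ := alloc Sigma.fst (cellRequest f) i

/-- The colour of the `i`-th item among the wide ones. -/
noncomputable def wideColour (i : ℕ) : ℕ := ktColour (fun j => (f j).wideInterval) i

/-- The bin and the position given to the `i`-th item. The kinds use bins of different residues
modulo `4`. -/
noncomputable def place (i : ℕ) : ℕ × ℝ × ℝ :=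
  match (f i).kind with
  | .zero => (0, (0, 0))
  | .wide => (4 * wideColour f i + 1,
      (min (1 - (f i).lx) (f i).wx, min (1 - (f i).lx) (f i).wx))
  | .narrow z => (4 * bucket Kind.cap (widths f) i + 2,
      (2 * (1 / 3) ^ (z + 2) + offset Kind.cap (widths f) i,
        2 * (1 / 3) ^ (z + 2) + offset Kind.cap (widths f) i))
  | .small k => (4 * QuadCell.ancestor ⟨k, cellNumber f i⟩ 0 + 3,
      quadCorner k (cellNumber f i) +
        (offset Kind.cap (widths f) i, offset Kind.cap (widths f) i))

lemma isOnline_place : IsOnline place := by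
  have online_widths : IsOnline widths := isOnline_map fun L : LShape => (L.kind, L.wx)
  have online_bucket := (isOnline_bucket Kind.cap).comp online_widths
  have online_offset := (isOnline_offset Kind.cap).comp online_widths
  have online_request : IsOnline cellRequest := fun f g i h => by
    simp only [cellRequest, h i le_rfl, online_bucket h]
  have online_cell : IsOnline cellNumber := (isOnline_alloc Sigma.fst).comp online_request
  have online_colour : IsOnline wideColour := isOnline_ktColour.comp (isOnline_map _)
  intro f g i h
  simp only [place, h i le_rfl, online_bucket h, online_offset h, online_cell h, online_colour h]

variable {f} {i j : ℕ}

lemma cellRequest_of_kind_eq {k : ℕ} (h : (f i).kind = .small k) :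
    cellRequest f i = some ⟨k, bucket Kind.cap (widths f) i⟩ := by
  rw [cellRequest, h]

lemma kind_eq_of_mem_cellRequest {a : Σ _ : ℕ, ℕ} (h : a ∈ cellRequest f i) :
    (f i).kind = .small a.1 ∧ bucket Kind.cap (widths f) i = a.2 := by
  unfold cellRequest at h
  split at h
  · rw [← Option.some_inj.1 h]
    exact ⟨by assumption, rfl⟩
  · simp at h

lemma widths_nonneg (hf : ∀ i, (f i).IsSymm) (i : ℕ) : 0 ≤ (widths f i).2 := (hf i).1.1

lemma hasKind_of_kind_eq (hf : ∀ i, (f i).IsSymm) {κ : Kind} (h : (f i).kind = κ) :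
    (f i).HasKind κ :=
  h ▸ (hf i).hasKind_kind

lemma offset_nonneg_lt_cap (hf : ∀ i, (f i).IsSymm) {κ : Kind} (h : (f i).kind = κ) :
    0 ≤ offset Kind.cap (widths f) i ∧ offset Kind.cap (widths f) i < κ.cap :=
  ⟨offset_nonneg Kind.cap_pos (widths_nonneg hf) i, h ▸ offset_lt Kind.cap_pos i⟩

/-! ### Validity of the packing -/

lemma place_subset_square (hf : ∀ i, (f i).IsSymm) {k : ℕ} (h : (f i).kind = .small k) :
    planeTranslate (place f i).2 (f i).toSet ⊆ QuadCell.square ⟨k, cellNumber f i⟩ := by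
  obtain ⟨-, short⟩ := hasKind_of_kind_eq hf h
  obtain ⟨offset0, offset1⟩ := offset_nonneg_lt_cap hf h
  have half : (1 / 2 : ℝ) ^ k = (1 / 2) ^ (k + 1) + (1 / 2) ^ (k + 1) := by ring
  have fits : (f i).lx + offset Kind.cap (widths f) i ≤ (1 / 2) ^ k := by
    rw [Kind.cap] at offset1
    linarith
  refine ((hf i).1.planeTranslate_subset_Icc _).trans ?_
  simp only [place, h, QuadCell.square]
  refine Set.Icc_subset_Icc (le_add_of_nonneg_right ⟨offset0, offset0⟩) ?_
  rw [← (hf i).2.1, add_left_comm]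
  exact add_le_add le_rfl ⟨fits, fits⟩

lemma place_subset_unitBin (hf : ∀ i, (f i).IsSymm) (i : ℕ) :
    planeTranslate (place f i).2 (f i).toSet ⊆ unitBin := by
  obtain ⟨w_nonneg, -, l_le_one, -⟩ := (hf i).1
  rcases h : (f i).kind with _ | _ | z | k
  · simp only [place, h]
    exact (hf i).subset_unitBin le_rfl (by linarith)
  · simp only [place, h]
    exact (hf i).subset_unitBin (le_min (by linarith) w_nonneg)
      (by linarith [min_le_left (1 - (f i).lx) (f i).wx])
  · obtain ⟨-, -, gap, -⟩ := hasKind_of_kind_eq hf h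
    obtain ⟨offset0, offset1⟩ := offset_nonneg_lt_cap hf h
    have third : (1 / 3 : ℝ) ^ (z + 1) = 3 * (1 / 3) ^ (z + 2) := by ring
    rw [Kind.cap] at offset1
    simp only [place, h]
    exact (hf i).subset_unitBin (by positivity) (by linarith)
  · exact (place_subset_square hf h).trans (QuadCell.square_subset_unitBin _)

lemma disjoint_of_wide (hf : ∀ i, (f i).IsSymm) (hij : i ≠ j) (hi : (f i).kind = .wide)
    (hj : (f j).kind = .wide) (hbin : (place f i).1 = (place f j).1) :
    Disjoint (interior (planeTranslate (place f i).2 (f i).toSet))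
      (interior (planeTranslate (place f j).2 (f j).toSet)) := by
  simp only [place, hi, hj] at hbin ⊢
  have disjoint : Disjoint (f i).wideInterval (f j).wideInterval :=
    disjoint_of_ktColour_eq (fun k => (f k).ordConnected_wideInterval) hij
      (by simp only [wideColour] at hbin; omega)
  rw [LShape.wideInterval_of_kind_eq hi, LShape.wideInterval_of_kind_eq hj,
    Set.Ico_disjoint_Ico] at disjoint
  have w_pos : ∀ k, (f k).kind = .wide → 0 < (f k).wx := fun k hk => by
    linarith [(hf k).1.2.2.1, (hasKind_of_kind_eq hf hk).2]
  have min_le : ∀ k, min (1 - (f k).lx) (f k).wx ≤ (f k).wx := fun k => min_le_right _ _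
  rcases le_max_iff.1 disjoint with h | h <;> rcases min_le_iff.1 h with h | h
  · linarith [w_pos i hi, min_le i]
  · simpa only [zero_add] using
      ((hf j).disjoint_interior 0 (by linarith [min_le j])).symm
  · simpa only [zero_add] using (hf i).disjoint_interior 0 (by linarith [min_le i])
  · linarith [w_pos j hj, min_le j]

lemma disjoint_of_narrow_lt (hf : ∀ i, (f i).IsSymm) {z z' : ℕ} (hi : (f i).kind = .narrow z)
    (hj : (f j).kind = .narrow z') (hlt : z < z') :
    Disjoint (interior (planeTranslate (place f i).2 (f i).toSet))
      (interior (planeTranslate (place f j).2 (f j).toSet)) := by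
  obtain ⟨-, thin, -⟩ := hasKind_of_kind_eq hf hj
  obtain ⟨offset0, -⟩ := offset_nonneg_lt_cap hf hi
  obtain ⟨-, offset1⟩ := offset_nonneg_lt_cap hf hj
  have third : (1 / 3 : ℝ) ^ (z' + 1) = 3 * (1 / 3) ^ (z' + 2) := by ring
  have scale : 3 * (1 / 3 : ℝ) ^ (z' + 2) ≤ (1 / 3) ^ (z + 2) :=
    third ▸ pow_le_pow_of_le_one (by norm_num) (by norm_num) (by omega)
  rw [Kind.cap] at offset1
  simp only [place, hi, hj]
  simpa only [zero_add] using ((hf j).disjoint_interior 0 (by linarith)).symm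

lemma disjoint_of_narrow (hf : ∀ i, (f i).IsSymm) (hij : i < j) {z z' : ℕ}
    (hi : (f i).kind = .narrow z) (hj : (f j).kind = .narrow z')
    (hbin : (place f i).1 = (place f j).1) :
    Disjoint (interior (planeTranslate (place f i).2 (f i).toSet))
      (interior (planeTranslate (place f j).2 (f j).toSet)) := by
  rcases lt_trichotomy z z' with hlt | rfl | hlt
  · exact disjoint_of_narrow_lt hf hi hj hlt
  · simp only [place, hi, hj] at hbin ⊢
    have order : offset Kind.cap (widths f) i + (f i).wx ≤ offset Kind.cap (widths f) j :=
      offset_add_le (widths_nonneg hf) hij (hi.trans hj.symm) (by omega)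
    simpa only [zero_add] using (hf i).disjoint_interior 0 (by linarith)
  · exact (disjoint_of_narrow_lt hf hj hi hlt).symm

lemma disjoint_of_small (hf : ∀ i, (f i).IsSymm) (hij : i < j) {k k' : ℕ}
    (hi : (f i).kind = .small k) (hj : (f j).kind = .small k')
    (hbin : (place f i).1 = (place f j).1) :
    Disjoint (interior (planeTranslate (place f i).2 (f i).toSet))
      (interior (planeTranslate (place f j).2 (f j).toSet)) := by
  have request_i := Option.mem_def.2 (cellRequest_of_kind_eq hi)
  have request_j := Option.mem_def.2 (cellRequest_of_kind_eq hj)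
  by_cases same : (⟨k, bucket Kind.cap (widths f) i⟩ : Σ _ : ℕ, ℕ) =
      ⟨k', bucket Kind.cap (widths f) j⟩
  · have same_cell : cellNumber f i = cellNumber f j :=
      alloc_eq_alloc request_i (same ▸ request_j)
    obtain ⟨rfl, same_bucket⟩ := Sigma.mk.inj same
    have order : offset Kind.cap (widths f) i + (f i).wx ≤ offset Kind.cap (widths f) j :=
      offset_add_le (widths_nonneg hf) hij (hi.trans hj.symm) (eq_of_heq same_bucket)
    simp only [place, hi, hj, same_cell]
    exact (hf i).disjoint_interior _ (by linarith)
  · have not_nested : ¬ QuadCell.Nested ⟨k, cellNumber f i⟩ ⟨k', cellNumber f j⟩ :=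
      not_nested_alloc request_i request_j same
    have same_root : QuadCell.ancestor ⟨k, cellNumber f i⟩ 0 =
        QuadCell.ancestor ⟨k', cellNumber f j⟩ 0 := by
      simp only [place, hi, hj] at hbin
      exact Nat.eq_of_mul_eq_mul_left four_pos (Nat.add_right_cancel hbin)
    exact (QuadCell.disjoint_interior_square same_root not_nested).mono
      (interior_mono (place_subset_square hf hi)) (interior_mono (place_subset_square hf hj))

lemma place_disjoint (hf : ∀ i, (f i).IsSymm) (hij : i ≠ j) (hbin : (place f i).1 = (place f j).1) :
    Disjoint (interior (planeTranslate (place f i).2 (f i).toSet))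
      (interior (planeTranslate (place f j).2 (f j).toSet)) := by
  wlog hlt : i < j generalizing i j
  · exact (this hij.symm hbin.symm (hij.lt_or_gt.resolve_left hlt)).symm
  rcases hi : (f i).kind with _ | _ | z | k <;> rcases hj : (f j).kind with _ | _ | z' | k'
  case zero.zero =>
    have w_eq : (f i).wx = 0 := hasKind_of_kind_eq hf hi
    simp only [place, hi, hj]
    simpa only [zero_add] using (hf i).disjoint_interior 0 (by linarith)
  case wide.wide => exact disjoint_of_wide hf hij hi hj hbin
  case narrow.narrow => exact disjoint_of_narrow hf hlt hi hj hbin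
  case small.small => exact disjoint_of_small hf hlt hi hj hbin
  all_goals
    simp only [place, hi, hj] at hbin
    omega

end Algorithm

/-! ### Number of bins -/

section BinCount

open scoped Classical in
/-- The total width of the items of kind `small k` among the first `N`. -/
noncomputable def smallWidth (f : ℕ → LShape) (N k : ℕ) : ℝ :=
  ∑ j ∈ range N with (f j).kind = .small k, (f j).wx

open scoped Classical in
/-- The levels of the small items among the first `N`. -/
noncomputable def smallLevels (f : ℕ → LShape) (N : ℕ) : Finset ℕ :=
  ((range N).image fun i => (f i).kind).preimage Kind.small fun _ _ _ _ h => Kind.small.inj h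

/-- A set containing all cell requests of the first `N` items. -/
noncomputable def cellKeys (f : ℕ → LShape) (N : ℕ) : Finset (Σ _ : ℕ, ℕ) :=
  (smallLevels f N).sigma fun k => range (⌊smallWidth f N k / (1 / 2) ^ (k + 1)⌋₊ + 1)

lemma sum_quarter_pow_le (K : Finset ℕ) : ∑ k ∈ K, (1 / 4 : ℝ) ^ k ≤ 4 / 3 := by
  have summable := summable_geometric_of_lt_one (r := (1 / 4 : ℝ)) (by norm_num) (by norm_num)
  refine (summable.sum_le_tsum K fun _ _ => by positivity).trans_eq ?_
  rw [tsum_geometric_of_lt_one (by norm_num) (by norm_num)]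
  norm_num

variable {f : ℕ → LShape} {i N m : ℕ}

lemma mem_cellKeys (hf : ∀ i, (f i).IsSymm) (hi : i < N) {a : Σ _ : ℕ, ℕ}
    (ha : a ∈ cellRequest f i) : a ∈ cellKeys f N := by
  classical
  obtain ⟨k, b⟩ := a
  obtain ⟨hk, rfl⟩ : (f i).kind = .small k ∧ bucket Kind.cap (widths f) i = b :=
    kind_eq_of_mem_cellRequest ha
  have load_le : load (widths f) i ≤ smallWidth f N k := by
    rw [smallWidth, ← hk]
    exact load_le_sum (widths_nonneg hf) hi.le
  refine mem_sigma.2 ⟨mem_preimage.2 (mem_image.2 ⟨i, mem_range.2 hi, hk⟩),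
    mem_range.2 (Nat.lt_succ_of_le (Nat.floor_le_floor ?_))⟩
  rw [show (widths f i).1 = .small k from hk, Kind.cap]
  gcongr

lemma small_width_mul_le (hf : ∀ i, (f i).IsSymm) {k : ℕ} (h : (f i).kind = .small k) :
    (f i).wx / (1 / 2) ^ (k + 1) * (1 / 4) ^ k ≤ 8 * ((f i).lx * (f i).wy) := by
  obtain ⟨long, -⟩ := hasKind_of_kind_eq hf h
  have quarter : (1 / 4 : ℝ) ^ k = (1 / 2) ^ (k + 1) * (8 * (1 / 2) ^ (k + 2)) := by
    rw [show (1 / 4 : ℝ) = 1 / 2 * (1 / 2) by norm_num, mul_pow]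
    ring
  calc (f i).wx / (1 / 2) ^ (k + 1) * (1 / 4) ^ k = 8 * ((1 / 2) ^ (k + 2) * (f i).wx) := by
        rw [quarter]
        field_simp
    _ ≤ 8 * ((f i).lx * (f i).wx) := by
        gcongr
        exact (hf i).1.1
    _ = 8 * ((f i).lx * (f i).wy) := by rw [(hf i).2.2]

lemma card_coverers_wideInterval_le (hf : ∀ i, (f i).IsSymm) (hfit : FitInBins f (range N) m)
    (p : ℝ) : #(coverers (fun j => (f j).wideInterval) N (fun _ => True) p) ≤ 6 * m := by
  have covers : ∀ j ∈ coverers (fun j => (f j).wideInterval) N (fun _ => True) p,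
      p ∈ (f j).wideInterval := fun j hj => ((mem_coverers _).1 hj).2.2
  have total := (hfit.mono (coverers_subset_range _)).sum_le (f := fun _ => 1) (B := 6)
    (s := coverers (fun j => (f j).wideInterval) N (fun _ => True) p) fun t ht hbin => by
      have kind_eq : ∀ j ∈ t, (f j).kind = .wide := fun j hj =>
        LShape.kind_eq_of_mem_wideInterval (covers j (ht hj))
      have wide := fun j hj => hasKind_of_kind_eq hf (kind_eq j hj)
      rw [sum_const, nsmul_one]
      exact_mod_cast hbin.card_le_six_of_wide (fun j _ => (hf j).1)
        (fun j hj => (hf j).2.1 ▸ (wide j hj).1) (fun j hj => (wide j hj).2) (p := p)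
        fun j hj => LShape.wideInterval_of_kind_eq (kind_eq j hj) ▸ covers j (ht hj)
  rw [sum_const, nsmul_one] at total
  rw [mul_comm]
  exact_mod_cast total

lemma wideColour_lt (hf : ∀ i, (f i).IsSymm) (hfit : FitInBins f (range N) m)
    (hi : i < N) (h : (f i).kind = .wide) : wideColour f i < 18 * m := by
  have w_pos : 0 < (f i).wx := by
    linarith [(hf i).1.2.2.1, (hasKind_of_kind_eq hf h).2]
  have nonempty : (f i).wideInterval.Nonempty := by
    rw [LShape.wideInterval_of_kind_eq h]
    exact ⟨(f i).wx, min_le_right _ _, by linarith⟩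
  have := ktColour_lt (fun j => (f j).ordConnected_wideInterval)
    (card_coverers_wideInterval_le hf hfit) hi nonempty
  rw [wideColour]
  omega

open scoped Classical in
lemma sum_width_narrow_le (hf : ∀ i, (f i).IsSymm) (hfit : FitInBins f (range N) m) (z : ℕ) :
    ∑ j ∈ range N with (f j).kind = .narrow z, (f j).wx ≤ m * (4 * (1 / 3) ^ (z + 1)) := by
  refine (hfit.mono (filter_subset _ _)).sum_le fun t ht hbin => ?_
  have narrow : ∀ j ∈ t, (f j).HasKind (.narrow z) := fun j hj =>
    hasKind_of_kind_eq hf (mem_filter.1 (ht hj)).2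
  refine hbin.sum_le_of_long (fun j _ => (hf j).1) (fun j hj => (hf j).2.1 ▸ (narrow j hj).1)
    (by positivity) (fun j _ => (hf j).1.1) (fun _ _ => le_rfl) fun j hj => ?_
  obtain ⟨-, thin, -, gap⟩ := narrow j hj
  rw [pow_succ] at thin ⊢
  linarith

lemma bucket_le_of_narrow (hf : ∀ i, (f i).IsSymm) (hfit : FitInBins f (range N) m)
    {z : ℕ} (hi : i < N) (h : (f i).kind = .narrow z) :
    bucket Kind.cap (widths f) i ≤ 12 * m := by
  classical
  have load_le : load (widths f) i ≤ ∑ j ∈ range N with (f j).kind = .narrow z, (f j).wx :=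
    h ▸ load_le_sum (widths_nonneg hf) hi.le
  refine Nat.floor_le_of_le ((div_le_iff₀ (Kind.cap_pos _)).2 ?_)
  rw [show (widths f i).1 = .narrow z from h, Kind.cap]
  refine (load_le.trans (sum_width_narrow_le hf hfit z)).trans_eq ?_
  push_cast
  ring

lemma sum_smallWidth_le (hf : ∀ i, (f i).IsSymm) (hfit : FitInBins f (range N) m) (K : Finset ℕ) :
    ∑ k ∈ K, smallWidth f N k / (1 / 2) ^ (k + 1) * (1 / 4) ^ k ≤ 8 * m := by
  classical
  have area_nonneg : ∀ j, 0 ≤ 8 * ((f j).lx * (f j).wy) := fun j => by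
    obtain ⟨hw, hwl, -, hw', -⟩ := (hf j).1
    exact mul_nonneg (by norm_num) (mul_nonneg (hw.trans hwl) hw')
  calc _ ≤ ∑ k ∈ K, ∑ j ∈ range N with (f j).kind = .small k, 8 * ((f j).lx * (f j).wy) := by
        refine sum_le_sum fun k _ => ?_
        rw [smallWidth, sum_div, sum_mul]
        exact sum_le_sum fun j hj => small_width_mul_le hf (mem_filter.1 hj).2
    _ = ∑ j ∈ range N with (f j).kind ∈ K.image Kind.small, 8 * ((f j).lx * (f j).wy) := by
        rw [← sum_fiberwise_eq_sum_filter, sum_image fun _ _ _ _ h => Kind.small.inj h]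
    _ ≤ ∑ j ∈ range N, 8 * ((f j).lx * (f j).wy) :=
        sum_le_sum_of_subset_of_nonneg (filter_subset _ _) fun j _ _ => area_nonneg j
    _ ≤ m * 8 := hfit.sum_le fun t _ hbin => by
        rw [← mul_sum]
        linarith [hbin.sum_area_le_one fun j _ => (hf j).1]
    _ = 8 * m := mul_comm _ _

lemma sum_cellKeys_le (hf : ∀ i, (f i).IsSymm) (hfit : FitInBins f (range N) m) :
    ∑ a ∈ cellKeys f N, (1 / 4 : ℝ) ^ a.1 ≤ 8 * m + 4 / 3 := by
  have width_nonneg : ∀ k, 0 ≤ smallWidth f N k := fun k => sum_nonneg fun j _ => (hf j).1.1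
  calc ∑ a ∈ cellKeys f N, (1 / 4 : ℝ) ^ a.1
      = ∑ k ∈ smallLevels f N,
          (⌊smallWidth f N k / (1 / 2) ^ (k + 1)⌋₊ + 1 : ℝ) * (1 / 4) ^ k := by
        simp [cellKeys, sum_sigma]
    _ ≤ ∑ k ∈ smallLevels f N, (smallWidth f N k / (1 / 2) ^ (k + 1) + 1) * (1 / 4) ^ k := by
        gcongr with k
        exact Nat.floor_le (div_nonneg (width_nonneg k) (by positivity))
    _ ≤ 8 * m + 4 / 3 := by
        simp only [add_mul, one_mul, sum_add_distrib]
        exact add_le_add (sum_smallWidth_le hf hfit _) (sum_quarter_pow_le _)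

lemma card_cellBins_le (hf : ∀ i, (f i).IsSymm) (hfit : FitInBins f (range N) m) :
    #(QuadCell.touched (allocated Sigma.fst (cellRequest f) N) 0) ≤ 8 * m + 2 := by
  have area := (sum_allocated_le (lev := Sigma.fst) (fun i hi a ha => mem_cellKeys hf hi ha)
    fun n => by positivity : ∑ c ∈ allocated Sigma.fst (cellRequest f) N, (1 / 4 : ℝ) ^ c.level ≤ _)
  have bins := (isLeftmost_allocated (lev := Sigma.fst) (x := cellRequest f) N).card_bins_le
  have : (#(QuadCell.touched (allocated Sigma.fst (cellRequest f) N) 0) : ℝ) <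
      (8 * m + 3 : ℕ) := by
    push_cast
    linarith [sum_cellKeys_le hf hfit]
  exact Nat.lt_succ_iff.1 (by exact_mod_cast this)

lemma card_image_place_le (hf : ∀ i, (f i).IsSymm) (hfit : FitInBins f (range N) m) :
    #((range N).image fun i => (place f i).1) ≤ 38 * m + 4 := by
  let cellBins := QuadCell.touched (allocated Sigma.fst (cellRequest f) N) 0
  have cover : (range N).image (fun i => (place f i).1) ⊆
      (({0} ∪ (range (18 * m)).image (4 * · + 1)) ∪ (range (12 * m + 1)).image (4 * · + 2)) ∪
        cellBins.image (4 * · + 3) := by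
    intro b hb
    obtain ⟨i, hi, rfl⟩ := mem_image.1 hb
    rw [mem_range] at hi
    simp only [mem_union, mem_singleton, mem_image, mem_range]
    rcases h : (f i).kind with _ | _ | z | k
    · simp [place, h]
    · exact Or.inl (Or.inl (Or.inr ⟨_, wideColour_lt hf hfit hi h, by simp [place, h]⟩))
    · exact Or.inl (Or.inr
        ⟨_, Nat.lt_succ_of_le (bucket_le_of_narrow hf hfit hi h), by simp [place, h]⟩)
    · refine Or.inr ⟨QuadCell.ancestor ⟨k, cellNumber f i⟩ 0,
        QuadCell.mem_touched.2 ⟨_, mem_allocated.2 ⟨i, hi, _, cellRequest_of_kind_eq h, rfl⟩,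
          Nat.zero_le _, rfl⟩, by simp [place, h]⟩
  have card_cellBins : #cellBins ≤ 8 * m + 2 := card_cellBins_le hf hfit
  calc _ ≤ _ := card_le_card cover
    _ ≤ 1 + 18 * m + (12 * m + 1) + #cellBins := by
        refine (card_union_le _ _).trans (add_le_add ((card_union_le _ _).trans (add_le_add
          ((card_union_le _ _).trans (add_le_add (card_singleton 0).le ?_)) ?_)) card_image_le)
        · exact card_image_le.trans (card_range _).le
        · exact card_image_le.trans (card_range _).le
    _ ≤ 38 * m + 4 := by omega

end BinCount

/-! ### Finite inputs -/

section FiniteInputs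

/-- The items of `l`, followed by points. -/
noncomputable def itemSeq (l : List LShape) (n : ℕ) : LShape := l.getD n ⟨0, 0, 0, 0⟩

/-- The online algorithm: the placement of the last item of `l`. -/
noncomputable def packLast (l : List LShape) : ℕ × ℝ × ℝ := place (itemSeq l) (l.length - 1)

variable {l : List LShape}

lemma itemSeq_coe (i : Fin l.length) : itemSeq l i = l.get i := by
  simp [itemSeq]

lemma isSymm_itemSeq (h : ∀ L ∈ l, L.IsSymm) (n : ℕ) : (itemSeq l n).IsSymm := by
  by_cases hn : n < l.length
  · rw [itemSeq_coe ⟨n, hn⟩]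
    exact h _ (List.get_mem _ _)
  · rw [itemSeq, List.getD_eq_default _ _ (not_lt.1 hn)]
    simp [LShape.IsSymm, LShape.IsValid]

lemma placeOf_packLast (i : Fin l.length) : placeOf packLast l i = place (itemSeq l) i := by
  have last : (l.take (i + 1)).length - 1 = i := by
    rw [List.length_take]
    omega
  rw [placeOf, packLast, last]
  refine isOnline_place fun j hj => ?_
  rw [itemSeq, itemSeq, List.getD_eq_getElem?_getD, List.getD_eq_getElem?_getD,
    List.getElem?_take, if_pos (Nat.lt_succ_of_le hj)]

lemma onlinePacks_packLast (h : ∀ L ∈ l, L.IsSymm) : OnlinePacks packLast l := by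
  refine ⟨fun i => ?_, fun i j hij hbin => ?_⟩
  · rw [placeOf_packLast, ← itemSeq_coe]
    exact place_subset_unitBin (isSymm_itemSeq h) i
  · rw [placeOf_packLast, placeOf_packLast] at hbin
    rw [placeOf_packLast, placeOf_packLast, ← itemSeq_coe, ← itemSeq_coe]
    exact place_disjoint (isSymm_itemSeq h) (Fin.val_injective.ne hij) hbin

lemma binsUsed_packLast (l : List LShape) :
    binsUsed packLast l = #((range l.length).image fun i => (place (itemSeq l) i).1) := by
  rw [binsUsed]
  congr 1
  ext b
  simp [placeOf_packLast, Fin.exists_iff]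

lemma offPacks_OPT (h : ∀ L ∈ l, L.IsValid) : OffPacks l (OPT l) := by
  refine Nat.sInf_mem (s := {m | OffPacks l m}) ⟨l.length, fun i => i, fun _ => 0, fun i => i.2,
    fun i => ?_, fun i j hij hbin => (hij (Fin.ext hbin)).elim⟩
  have hL := h _ (List.get_mem l i)
  refine hL.planeTranslate_subset_unitBin_iff.2 ⟨le_rfl, ?_⟩
  rw [add_zero]
  exact ⟨hL.2.2.1, hL.2.2.2.2.2⟩

lemma OffPacks.fitInBins {m : ℕ} (h : OffPacks l m) :
    FitInBins (itemSeq l) (range l.length) m := by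
  obtain ⟨bin, v, hbin, hsub, hdisj⟩ := h
  refine ⟨fun i => if hi : i < l.length then bin ⟨i, hi⟩ else 0, fun i hi => ?_,
    fun b => ⟨fun i => if hi : i < l.length then v ⟨i, hi⟩ else 0, fun i hi => ?_,
      fun i hi j hj hij => ?_⟩⟩
  · simpa only [dif_pos (mem_range.1 hi)] using hbin ⟨i, mem_range.1 hi⟩
  · obtain ⟨hi, -⟩ := mem_filter.1 hi
    rw [mem_range] at hi
    simpa only [dif_pos hi, itemSeq_coe ⟨i, hi⟩] using hsub ⟨i, hi⟩
  · obtain ⟨hi, hbi⟩ := mem_filter.1 hi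
    obtain ⟨hj, hbj⟩ := mem_filter.1 hj
    rw [mem_range] at hi hj
    simp only [dif_pos hi] at hbi
    simp only [dif_pos hj] at hbj
    simpa only [Function.onFun, dif_pos hi, dif_pos hj, itemSeq_coe ⟨i, hi⟩,
      itemSeq_coe ⟨j, hj⟩] using
      hdisj ⟨i, hi⟩ ⟨j, hj⟩ (by simpa using hij) (hbi.trans hbj.symm)

lemma binsUsed_packLast_le (h : ∀ L ∈ l, L.IsSymm) : binsUsed packLast l ≤ 38 * OPT l + 4 := by
  rw [binsUsed_packLast]
  have fit := (offPacks_OPT fun L hL => (h L hL).1).fitInBins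
  exact card_image_place_le (isSymm_itemSeq h) fit

end FiniteInputs

/-- there is a deterministic online bin-packing algorithm that, on every input
sequence of symmetric L-shapes (`ℓx = ℓy` and `wx = wy`), produces a valid packing using at
most `41·OPT + 9` bins. -/
theorem stmt8 :
    ∃ A : List LShape → ℕ × ℝ × ℝ,
      ∀ l : List LShape,
        (∀ L ∈ l, L.IsValid ∧ L.lx = L.ly ∧ L.wx = L.wy) →
        OnlinePacks A l ∧ binsUsed A l ≤ 41 * OPT l + 9 := by
  refine ⟨packLast, fun l symm => ⟨onlinePacks_packLast symm, ?_⟩⟩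
  calc binsUsed packLast l ≤ 38 * OPT l + 4 := binsUsed_packLast_le symm
    _ ≤ 41 * OPT l + 9 := by gcongr <;> norm_num
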